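/- arXiv:math/0011230 — 2 statements merged into one kernel-verified Lean document; each statement's English description precedes it below -/
import Mathlib

section
/- For every cardinal κ ≥ ℵ₁ there exists a commutative ring R such that: R is a principal ideal domain (and not a field); R is local with maximal ideal generated by a prime element p; R is not complete in the p-adic topology (there is a p-adically Cauchy sequence in R with no limit in R); R has cardinality 2^κ; and every R-module M that is ℵ₁-free and κ-generated is a Whitehead module, i.e., Ext¹_R(M, R) = 0. -/
/-!
Statement 0 (Eklof–Shelah, "Whitehead modules over large principal ideal domains",
Theorem 1): There is a slender (local, not `p`-adically complete) p.i.d. `R` of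
cardinality `2 ^ ℵ₁` such that every `ℵ₁`-free `ℵ₁`-generated `R`-module is a
Whitehead module.
-/

open Cardinal

universe u

/-- The first Ext group `Ext¹_R(M, N)` (as a module, via the derived-functor `Ext`). -/
noncomputable def ext1 (R : Type u) [CommRing R] (M N : Type u) [AddCommGroup M] [Module R M]
    [AddCommGroup N] [Module R N] : ModuleCat R :=
  ((Ext R (ModuleCat.{u} R) 1).obj (Opposite.op (ModuleCat.of R M))).obj (ModuleCat.of R N)

/-- `M` is a Whitehead `R`-module: `Ext¹_R(M, R) = 0`. -/
def IsWhitehead (R : Type u) [CommRing R] (M : Type u) [AddCommGroup M] [Module R M] : Prop :=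
  Subsingleton (ext1 R M R)

/-- `M` is `κ`-generated: generated by a subset of cardinality `≤ κ`. -/
def IsGenerated (R : Type u) [Semiring R] (M : Type u) [AddCommMonoid M] [Module R M]
    (κ : Cardinal.{u}) : Prop :=
  ∃ S : Set M, #S ≤ κ ∧ Submodule.span R S = ⊤

/-- `M` is `κ`-free: every submodule generated by fewer than `κ` elements is free.
(So `ℵ₁`-free means every countably generated submodule is free.) -/
def IsKappaFree (R : Type u) [Ring R] (M : Type u) [AddCommGroup M] [Module R M]
    (κ : Cardinal.{u}) : Prop :=
  ∀ S : Set M, #S < κ → Module.Free R (Submodule.span R S)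

/-- `a` is a Cauchy sequence for the `p`-adic topology on `R`. -/
def PAdicCauchy {R : Type u} [CommRing R] (p : R) (a : ℕ → R) : Prop :=
  ∀ n : ℕ, ∃ N : ℕ, ∀ j ≥ N, ∀ k ≥ N, p ^ n ∣ (a j - a k)

/-- `L` is a limit of the sequence `a` in the `p`-adic topology on `R`. -/
def PAdicLimit {R : Type u} [CommRing R] (p : R) (a : ℕ → R) (L : R) : Prop :=
  ∀ n : ℕ, ∃ N : ℕ, ∀ j ≥ N, p ^ n ∣ (a j - L)

/-- `R` is not complete in the `p`-adic topology: there is a `p`-adically Cauchy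
sequence in `R` with no limit in `R`. -/
def NotPAdicComplete (R : Type u) [CommRing R] (p : R) : Prop :=
  ∃ a : ℕ → R, PAdicCauchy p a ∧ ∀ L : R, ¬ PAdicLimit p a L

/-- If homomorphisms into `N` extend from the kernel of one surjection from a projective module
onto `M`, then they extend from the kernel of any other. -/
theorem exists_extend_of_surjective_projective {R M N F P : Type*} [CommRing R]
    [AddCommGroup M] [Module R M] [AddCommGroup N] [Module R N] [AddCommGroup F] [Module R F]
    [AddCommGroup P] [Module R P] [Module.Projective R F] [Module.Projective R P]
    (π : F →ₗ[R] M) (hπ : Function.Surjective π) (ρ : P →ₗ[R] M) (hρ : Function.Surjective ρ)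
    (h : ∀ φ : LinearMap.ker π →ₗ[R] N, ∃ ψ : F →ₗ[R] N, ∀ x : LinearMap.ker π, ψ x = φ x)
    (φ : LinearMap.ker ρ →ₗ[R] N) : ∃ ψ : P →ₗ[R] N, ∀ x : LinearMap.ker ρ, ψ x = φ x := by
  obtain ⟨u, hu⟩ := Module.projective_lifting_property π ρ hπ
  obtain ⟨v, hv⟩ := Module.projective_lifting_property ρ π hρ
  have hu' : ∀ x, π (u x) = ρ x := fun x => by rw [← hu]; rfl
  have hv' : ∀ x, ρ (v x) = π x := fun x => by rw [← hv]; rfl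
  obtain ⟨ψ, hψ⟩ := h (φ ∘ₗ (v.restrict (p := LinearMap.ker π) (q := LinearMap.ker ρ)
    (fun x hx => by simpa [hv'] using hx)))
  refine ⟨ψ ∘ₗ u + φ ∘ₗ ((LinearMap.id - v ∘ₗ u).codRestrict (LinearMap.ker ρ)
    (fun x => by simp [hu', hv'])), fun x => ?_⟩
  have hx : u x.1 ∈ LinearMap.ker π := by
    have := x.2
    simp only [LinearMap.mem_ker] at this ⊢
    rw [hu', this]
  have := hψ ⟨u x.1, hx⟩
  simp only [LinearMap.add_apply, LinearMap.comp_apply] at this ⊢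
  rw [this, ← map_add]
  congr 1
  ext
  simp

open CategoryTheory in
/-- A module is Whitehead as soon as homomorphisms into `R` extend from the kernel of some
surjection from a projective module. -/
theorem isWhitehead_of_exists_extend {R M F : Type u} [CommRing R] [AddCommGroup M] [Module R M]
    [AddCommGroup F] [Module R F] [Module.Projective R F]
    (π : F →ₗ[R] M) (hπ : Function.Surjective π)
    (h : ∀ φ : LinearMap.ker π →ₗ[R] R, ∃ ψ : F →ₗ[R] R, ∀ x : LinearMap.ker π, ψ x = φ x) :
    IsWhitehead R M := by
  unfold IsWhitehead ext1
  refine ModuleCat.subsingleton_of_isZero ?_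
  let P := projectiveResolution (ModuleCat.of R M)
  refine Limits.IsZero.of_iso ?_ (P.isoExt 1 (ModuleCat.of R R))
  rw [← HomologicalComplex.exactAt_iff_isZero_homology,
    HomologicalComplex.exactAt_iff' _ 0 1 2 (by simp) (by simp)]
  rw [ShortComplex.moduleCat_exact_iff]
  intro f hf
  change (P.complex.X 1 ⟶ ModuleCat.of R R) at f
  have hf' : P.complex.d 2 1 ≫ f = 0 := hf
  have hρ : Function.Surjective (P.π.f 0).hom := by
    rw [← ModuleCat.epi_iff_surjective]; infer_instance
  have : Module.Projective R (P.complex.X 0) := by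
    rw [IsProjective.iff_projective]; exact P.projective 0
  have ex0 := (ShortComplex.moduleCat_exact_iff _).1 P.exact₀
  have ex1 := (ShortComplex.moduleCat_exact_iff _).1 (P.exact_succ 0)
  have hd : ∀ z, (P.π.f 0).hom ((P.complex.d 1 0).hom z) = 0 := fun z =>
    congr($(P.complex_d_comp_π_f_zero).hom z)
  let ρ : P.complex.X 0 →ₗ[R] M := (P.π.f 0).hom
  let d : P.complex.X 1 →ₗ[R] LinearMap.ker ρ := (P.complex.d 1 0).hom.codRestrict _ hd
  have hdsurj : Function.Surjective d := by
    rintro ⟨y, hy⟩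
    obtain ⟨z, hz⟩ := ex0 y hy
    exact ⟨z, Subtype.ext hz⟩
  let g := (LinearMap.ker d).liftQ f.hom (by
      intro z hz
      obtain ⟨w, rfl⟩ := ex1 z congr(($(LinearMap.mem_ker.1 hz)).1)
      exact congr($(hf').hom w)) ∘ₗ (d.quotKerEquivOfSurjective hdsurj).symm.toLinearMap
  have hg : ∀ z, g (d z) = f.hom z := by
    intro z
    have : (d.quotKerEquivOfSurjective hdsurj).symm (d z) = (LinearMap.ker d).mkQ z := by
      rw [LinearEquiv.symm_apply_eq]; rfl
    simp [g, this]
  obtain ⟨ψ, hψ⟩ := exists_extend_of_surjective_projective π hπ ρ hρ h g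
  refine ⟨ModuleCat.ofHom ψ, ?_⟩
  change P.complex.d 1 0 ≫ ModuleCat.ofHom ψ = f
  ext z
  exact (hψ (d z)).trans (hg z)

/-- Every finite subset of `M` lies in a finitely generated submodule closed under division
by `p`. -/
def HasFinitePureHulls {R : Type*} (M : Type*) [CommRing R] [AddCommGroup M] [Module R M]
    (p : R) : Prop :=
  ∀ s : Finset M, ∃ A : Submodule R M, A.FG ∧ (s : Set M) ⊆ A ∧ ∀ m, p • m ∈ A → m ∈ A

theorem isTorsionFree_of_irreducible {R M : Type*} [CommRing R] [IsDomain R]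
    [IsDiscreteValuationRing R] [AddCommGroup M] [Module R M] {p : R} (hp : Irreducible p)
    (h : ∀ m : M, p • m = 0 → m = 0) : Module.IsTorsionFree R M := by
  refine .of_smul_eq_zero fun r m hrm => ?_
  refine or_iff_not_imp_left.2 fun hr => ?_
  obtain ⟨n, u, rfl⟩ := IsDiscreteValuationRing.eq_unit_mul_pow_irreducible hr hp
  have hm : p ^ n • m = 0 := by
    rw [mul_smul] at hrm
    exact (smul_eq_zero_iff_eq u).1 hrm
  clear hrm hr
  induction n with
  | zero => simpa using hm
  | succ n ih => exact ih (h _ (by rwa [← mul_smul, ← pow_succ']))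

theorem isTorsionFree_quotient {R M : Type*} [CommRing R] [IsDomain R]
    [IsDiscreteValuationRing R] [AddCommGroup M] [Module R M] {p : R} (hp : Irreducible p)
    {A : Submodule R M} (h : ∀ m, p • m ∈ A → m ∈ A) : Module.IsTorsionFree R (M ⧸ A) := by
  refine isTorsionFree_of_irreducible hp fun m => ?_
  obtain ⟨m, rfl⟩ := A.mkQ_surjective m
  rw [← map_smul, Submodule.mkQ_apply, Submodule.mkQ_apply, Submodule.Quotient.mk_eq_zero,
    Submodule.Quotient.mk_eq_zero]
  exact h m

theorem IsKappaFree.isTorsionFree {R M : Type} [CommRing R] [IsDomain R]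
    [AddCommGroup M] [Module R M] (h : IsKappaFree R M (aleph 1)) :
    Module.IsTorsionFree R M := by
  refine .of_smul_eq_zero fun r m hrm => ?_
  have := h {m} (by simp)
  have h0 : r • (⟨m, Submodule.mem_span_singleton_self m⟩ : Submodule.span R {m}) = 0 :=
    Subtype.ext hrm
  simpa using smul_eq_zero.1 h0

theorem IsKappaFree.hasFinitePureHulls {R M : Type} [CommRing R] [IsDomain R]
    [IsNoetherianRing R] [AddCommGroup M] [Module R M] (h : IsKappaFree R M (aleph 1))
    {p : R} (hp : p ≠ 0) : HasFinitePureHulls M p := by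
  classical
  intro s
  have := h.isTorsionFree
  have hfg : ∀ n : ℕ, ((Submodule.span R (s : Set M)).comap (LinearMap.lsmul R M (p ^ n))).FG := by
    intro n
    refine Submodule.fg_of_fg_map_injective (LinearMap.lsmul R M (p ^ n)) ?_ ?_
    · exact smul_right_injective M (pow_ne_zero n hp)
    · have : IsNoetherian R (Submodule.span R (s : Set M)) :=
        isNoetherian_span_of_finite R s.finite_toSet
      exact isNoetherian_submodule.1 this _ (Submodule.map_comap_le _ _)
  choose G hG using hfg
  have hB : ∀ m, m ∈ Submodule.span R (⋃ n, (G n : Set M)) ↔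
      ∃ n, p ^ n • m ∈ Submodule.span R (s : Set M) := by
    intro m
    refine ⟨fun hm => ?_, fun ⟨n, hn⟩ => ?_⟩
    · induction hm using Submodule.span_induction with
      | mem x hx =>
        obtain ⟨n, hn⟩ := Set.mem_iUnion.1 hx
        have : x ∈ Submodule.span R (G n : Set M) := Submodule.subset_span hn
        rw [hG n] at this
        exact ⟨n, this⟩
      | zero => exact ⟨0, by simp⟩
      | add x y _ _ hx hy =>
        obtain ⟨a, ha⟩ := hx
        obtain ⟨b, hb⟩ := hy
        refine ⟨a + b, ?_⟩
        rw [smul_add]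
        refine add_mem ?_ ?_
        · rw [add_comm, pow_add, mul_smul]
          exact Submodule.smul_mem _ _ ha
        · rw [pow_add, mul_smul]
          exact Submodule.smul_mem _ _ hb
      | smul r x _ hx =>
        obtain ⟨a, ha⟩ := hx
        exact ⟨a, by rw [smul_comm]; exact Submodule.smul_mem _ _ ha⟩
    · refine Submodule.span_mono (Set.subset_iUnion (fun n => (G n : Set M)) n) ?_
      rw [hG n]
      exact hn
  have hfree := h (⋃ n, (G n : Set M))
    (Cardinal.lt_aleph_one_iff.2 <| Cardinal.le_aleph0_iff_set_countable.2
    (Set.countable_iUnion fun n => (G n).countable_toSet))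
  set B := Submodule.span R (⋃ n, (G n : Set M))
  have hsB : (s : Set M) ⊆ B := fun x hx =>
    (hB x).2 ⟨0, by simpa using Submodule.subset_span hx⟩
  refine ⟨B, ?_, hsB, fun m hm => ?_⟩
  · let β := Module.Free.chooseBasis R B
    let s' : Finset B := s.subtype (· ∈ B)
    let T := s'.biUnion fun x => (β.repr x).support
    have hs' : Submodule.span R (s' : Set B) ≤ Submodule.span R (β '' T) := by
      rw [Submodule.span_le]
      intro x hx
      rw [SetLike.mem_coe, Module.Basis.mem_span_image]
      exact Finset.coe_subset.2 (Finset.subset_biUnion_of_mem (fun x => (β.repr x).support) hx)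
    have hs : ((Submodule.span R (s' : Set B)).map B.subtype) = Submodule.span R (s : Set M) := by
      rw [Submodule.map_span]
      congr 1
      ext x
      simp only [Submodule.coe_subtype, Set.mem_image, SetLike.mem_coe, Finset.mem_subtype, s']
      exact ⟨fun ⟨y, hy, e⟩ => e ▸ hy, fun hx => ⟨⟨x, hsB hx⟩, hx, rfl⟩⟩
    have htop : (⊤ : Submodule R B) = Submodule.span R (β '' T) := by
      refine le_antisymm (fun m _ => ?_) le_top
      obtain ⟨n, hn⟩ := (hB m).1 m.2
      rw [← hs] at hn
      obtain ⟨y, hy, hym⟩ := hn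
      have hy' : y = p ^ n • m := Subtype.ext hym
      have := hs' hy
      rw [hy', Module.Basis.mem_span_image, map_smul,
        Finsupp.support_smul_eq (pow_ne_zero n hp)] at this
      rwa [Module.Basis.mem_span_image]
    refine Submodule.fg_top B |>.1 ?_
    rw [htop]
    exact Submodule.fg_span (T.finite_toSet.image _)
  · obtain ⟨n, hn⟩ := (hB _).1 hm
    exact (hB m).2 ⟨n + 1, by rwa [pow_succ, mul_smul]⟩

/-- A submodule of a free module over a Noetherian ring needs no more generators than the
cardinality of an infinite basis. -/
theorem exists_generators_of_submodule_finsupp {R I : Type} [CommRing R] [IsNoetherianRing R]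
    [Infinite I] (K : Submodule R (I →₀ R)) :
    ∃ g : I → I →₀ R, Submodule.span R (Set.range g) = K := by
  classical
  have hfg : ∀ T : Finset I, (K ⊓ Finsupp.supported R R (T : Set I)).FG := by
    intro T
    have : IsNoetherian R (Finsupp.supported R R (T : Set I)) :=
      isNoetherian_of_linearEquiv (Finsupp.supportedEquivFinsupp (T : Set I)).symm
    exact isNoetherian_submodule.1 this _ inf_le_right
  choose G hG using hfg
  have hcard : #(⋃ T, (G T : Set (I →₀ R)) : Set (I →₀ R)) ≤ #I := by
    refine (Cardinal.mk_iUnion_le _).trans ?_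
    rw [Cardinal.mk_finset_of_infinite]
    refine mul_le_of_le (aleph0_le_mk I) le_rfl (ciSup_le' fun T => ?_)
    exact (Cardinal.mk_le_aleph0_iff.2 (G T).countable_toSet).trans (aleph0_le_mk I)
  have hspan : Submodule.span R (⋃ T, (G T : Set (I →₀ R))) = K := by
    rw [Submodule.span_iUnion]
    simp only [hG]
    refine le_antisymm (iSup_le fun T => inf_le_left) fun f hf => ?_
    exact (le_iSup (fun T : Finset I => K ⊓ Finsupp.supported R R (T : Set I)) f.support)
      ⟨hf, by simp [Finsupp.mem_supported]⟩
  by_cases hne : (⋃ T, (G T : Set (I →₀ R))).Nonempty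
  · have : Nonempty (⋃ T, (G T : Set (I →₀ R)) : Set (I →₀ R)) := hne.to_subtype
    obtain ⟨e⟩ := hcard
    refine ⟨fun i => (Function.invFun e i).1, ?_⟩
    rw [← hspan]
    congr 1
    ext x
    constructor
    · rintro ⟨i, rfl⟩
      exact (Function.invFun e i).2
    · intro hx
      exact ⟨e ⟨x, hx⟩, by simp [Function.leftInverse_invFun e.injective _]⟩
  · refine ⟨fun _ => 0, ?_⟩
    rw [← hspan, Set.not_nonempty_iff_eq_empty.1 hne]
    simp

/-- Membership in a submodule descends along faithfully flat base change. -/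
theorem mem_of_mem_span_image {A B I M : Type*} [CommRing A] [CommRing B] [Algebra A B]
    [Module.FaithfullyFlat A B] [AddCommGroup M] [Module B M]
    (π : (I →₀ B) →ₗ[B] M) {J : Type*} (g : J → I →₀ A)
    (hg : LinearMap.ker π = Submodule.span B
      (Set.range fun j => (g j).mapRange (algebraMap A B) (map_zero _)))
    (N : Submodule A (I →₀ A)) (hN : Submodule.span A (Set.range g) ≤ N) (f : I →₀ A)
    (hf : π (f.mapRange (algebraMap A B) (map_zero _)) ∈ Submodule.span B
      ((fun n : I →₀ A => π (n.mapRange (algebraMap A B) (map_zero _))) '' N)) : f ∈ N := by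
  open TensorProduct in
  let L : (I →₀ B) →ₗ[B] B ⊗[A] ((I →₀ A) ⧸ N) :=
    Finsupp.linearCombination B fun i => 1 ⊗ₜ N.mkQ (Finsupp.single i 1)
  have hL : ∀ f : I →₀ A, L (f.mapRange (algebraMap A B) (map_zero _)) = 1 ⊗ₜ[A] N.mkQ f := by
    intro f
    induction f using Finsupp.induction_linear with
    | zero => simp
    | add f g hf hg =>
      rw [Finsupp.mapRange_add (by simp), map_add, hf, hg, map_add, TensorProduct.tmul_add]
    | single i a =>
      have : Finsupp.single i a = a • Finsupp.single i (1 : A) := by simp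
      rw [Finsupp.mapRange_single, this, map_smul, TensorProduct.tmul_smul]
      simp [L]
  have hLN : ∀ n ∈ N, L (n.mapRange (algebraMap A B) (map_zero _)) = 0 := by
    intro n hn
    rw [hL, Submodule.mkQ_apply, (Submodule.Quotient.mk_eq_zero N).2 hn, TensorProduct.tmul_zero]
  have hker : LinearMap.ker π ≤ LinearMap.ker L := by
    rw [hg, Submodule.span_le]
    rintro _ ⟨j, rfl⟩
    exact hLN _ (hN (Submodule.subset_span ⟨j, rfl⟩))
  have key : Submodule.span B
      ((fun n : I →₀ A => π (n.mapRange (algebraMap A B) (map_zero _))) '' N) ≤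
      (LinearMap.ker L).map π := by
    rw [Submodule.span_le]
    rintro _ ⟨n, hn, rfl⟩
    exact ⟨_, hLN n hn, rfl⟩
  obtain ⟨f', hf', e⟩ := key hf
  have h0 : L (f.mapRange (algebraMap A B) (map_zero _)) = 0 := by
    have := hker (show f.mapRange (algebraMap A B) (map_zero _) - f' ∈ LinearMap.ker π by
      rw [LinearMap.mem_ker, map_sub, e, sub_self])
    rw [LinearMap.mem_ker, map_sub, hf', sub_zero] at this
    exact this
  rw [hL] at h0
  have := Module.FaithfullyFlat.tensorProduct_mk_injective (A := A) (B := B) ((I →₀ A) ⧸ N)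
    (a₁ := N.mkQ f) (a₂ := 0) (by simpa using h0)
  exact (Submodule.Quotient.mk_eq_zero N).1 this

section Descent

variable {A B I J M : Type*} [CommRing A] [CommRing B] [Algebra A B]
    [Module.FaithfullyFlat A B] [AddCommGroup M] [Module B M]
    {p : A}

theorem mem_span_of_smul_mem_span (π : (I →₀ B) →ₗ[B] M) (g : J → I →₀ A)
    (hg : LinearMap.ker π = Submodule.span B
      (Set.range fun j => (g j).mapRange (algebraMap A B) (map_zero _)))
    (hp : ∀ m : M, algebraMap A B p • m = 0 → m = 0)
    (f : I →₀ A) (hf : p • f ∈ Submodule.span A (Set.range g)) :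
    f ∈ Submodule.span A (Set.range g) := by
  refine mem_of_mem_span_image π g hg _ le_rfl f ?_
  have hz : ∀ f ∈ Submodule.span A (Set.range g),
      π (f.mapRange (algebraMap A B) (map_zero _)) = 0 := by
    intro f hf
    induction hf using Submodule.span_induction with
    | mem f hf =>
      obtain ⟨j, rfl⟩ := hf
      have : (g j).mapRange (algebraMap A B) (map_zero _) ∈ LinearMap.ker π :=
        hg ▸ Submodule.subset_span ⟨j, rfl⟩
      exact this
    | zero => simp
    | add f g _ _ hf hg => rw [Finsupp.mapRange_add (by simp), map_add, hf, hg, add_zero]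
    | smul a f _ hf =>
      rw [Finsupp.mapRange_smul' a (algebraMap A B a) f (by simp), map_smul, hf, smul_zero]
  have h0 := hz _ hf
  rw [Finsupp.mapRange_smul' p (algebraMap A B p) f (by simp), map_smul] at h0
  rw [hp _ h0]
  exact zero_mem _

theorem HasFinitePureHulls.descend [IsNoetherianRing B] (π : (I →₀ B) →ₗ[B] M) (g : J → I →₀ A)
    (hg : LinearMap.ker π = Submodule.span B
      (Set.range fun j => (g j).mapRange (algebraMap A B) (map_zero _)))
    (h : HasFinitePureHulls M (algebraMap A B p)) :
    HasFinitePureHulls ((I →₀ A) ⧸ Submodule.span A (Set.range g)) p := by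
  classical
  intro s
  let ι : (I →₀ A) →ₗ[A] (I →₀ B) := Finsupp.mapRange.linearMap (Algebra.linearMap A B)
  choose r hr using (Submodule.span A (Set.range g)).mkQ_surjective
  obtain ⟨C, hCfg, hsC, hC⟩ := h (s.image fun m => π (ι (r m)))
  let C' : Submodule A (I →₀ A) := ((C.comap π).restrictScalars A).comap ι
  have hgC : Submodule.span A (Set.range g) ≤ C' := by
    rw [Submodule.span_le]
    rintro _ ⟨j, rfl⟩
    have : ι (g j) ∈ LinearMap.ker π := hg ▸ Submodule.subset_span ⟨j, rfl⟩
    change π (ι (g j)) ∈ C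
    rw [LinearMap.mem_ker.1 this]
    exact zero_mem _
  refine ⟨C'.map (Submodule.mkQ _), ?_, fun m hm => ⟨r m, ?_, hr m⟩, fun m hm => ?_⟩
  · have : IsNoetherian B C := isNoetherian_of_fg_of_noetherian C hCfg
    have hle : Submodule.span B ((fun n : I →₀ A => π (ι n)) '' C') ≤ C := by
      rw [Submodule.span_le]
      rintro _ ⟨n, hn, rfl⟩
      exact hn
    obtain ⟨t, ht, hspan⟩ := (Submodule.fg_span_iff_fg_span_finset_subset _).1
      (isNoetherian_submodule.1 this _ hle)
    obtain ⟨t', ht', rfl⟩ := Finset.subset_set_image_iff.1 ht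
    have : C' ≤ Submodule.span A (Set.range g) ⊔ Submodule.span A (t' : Set (I →₀ A)) := by
      intro f hf
      refine mem_of_mem_span_image π g hg _ le_sup_left f ?_
      have hf' : π (ι f) ∈ Submodule.span B ((fun n : I →₀ A => π (ι n)) '' C') :=
        Submodule.subset_span ⟨f, hf, rfl⟩
      rw [hspan] at hf'
      refine Submodule.span_mono ?_ hf'
      rw [Finset.coe_image]
      exact Set.image_mono (Submodule.subset_span.trans
        (SetLike.coe_subset_coe.2 le_sup_right))
    have heq : C'.map (Submodule.mkQ (Submodule.span A (Set.range g))) =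
        (Submodule.span A (t' : Set (I →₀ A))).map (Submodule.mkQ _) := by
      refine le_antisymm ((Submodule.map_mono this).trans ?_)
        (Submodule.map_mono (Submodule.span_le.2 ht'))
      rw [Submodule.map_sup, Submodule.mkQ_map_self, bot_sup_eq]
    rw [heq]
    exact (Submodule.fg_span t'.finite_toSet).map _
  · exact hsC (by simpa using ⟨m, hm, rfl⟩)
  · obtain ⟨f, rfl⟩ := Submodule.mkQ_surjective _ m
    rw [← map_smul, ← Submodule.mem_comap, Submodule.comap_map_eq, Submodule.ker_mkQ,
      sup_eq_left.2 hgC] at hm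
    refine Submodule.mem_map_of_mem (hC _ ?_)
    have : π (ι (p • f)) ∈ C := hm
    rw [map_smul, ← algebraMap_smul B, map_smul] at this
    exact this

end Descent

open DirectSum in
/-- Finite pure hulls are inherited by direct sums. -/
theorem HasFinitePureHulls.directSum {R T : Type*} [CommRing R] {M : T → Type*}
    [∀ t, AddCommGroup (M t)] [∀ t, Module R (M t)] {p : R}
    (hp : ∀ t, ∀ m : M t, p • m = 0 → m = 0)
    (h : ∀ t, HasFinitePureHulls (M t) p) : HasFinitePureHulls (⨁ t, M t) p := by
  classical
  intro s
  choose A hfg hA hpure using fun t => h t (s.image fun m => m t)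
  let S := s.biUnion fun m => m.support
  let D : Submodule R (⨁ t, M t) := ⨆ t ∈ S, (A t).map (DirectSum.lof R T M t)
  have hD : ∀ m : ⨁ t, M t, m ∈ D ↔ (∀ t, m t ∈ A t) ∧ ∀ t, t ∉ S → m t = 0 := by
    intro m
    constructor
    · intro hm
      let E : Submodule R (⨁ t, M t) :=
        { carrier := {m | (∀ t, m t ∈ A t) ∧ ∀ t, t ∉ S → m t = 0}
          zero_mem' := ⟨fun t => zero_mem _, fun t _ => rfl⟩
          add_mem' := fun {a b} ha hb => ⟨fun t => add_mem (ha.1 t) (hb.1 t), fun t ht => by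
            rw [DirectSum.add_apply, ha.2 t ht, hb.2 t ht, add_zero]⟩
          smul_mem' := fun r a ha => ⟨fun t => Submodule.smul_mem _ r (ha.1 t), fun t ht => by
            rw [DirectSum.smul_apply, ha.2 t ht, smul_zero]⟩ }
      have : D ≤ E := by
        refine iSup₂_le fun t ht => ?_
        rintro _ ⟨a, ha, rfl⟩
        refine ⟨fun t' => ?_, fun t' ht' => ?_⟩
        · by_cases e : t = t'
          · subst e
            simpa [DirectSum.lof_apply] using ha
          · rw [DirectSum.lof_eq_of, DirectSum.of_eq_of_ne _ _ _ (Ne.symm e)]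
            exact zero_mem _
        · rw [DirectSum.lof_eq_of, DirectSum.of_eq_of_ne]
          rintro rfl
          exact ht' ht
      exact this hm
    · rintro ⟨h1, h2⟩
      rw [← DirectSum.sum_support_of m]
      refine sum_mem fun t ht => ?_
      have htS : t ∈ S := by
        by_contra hcon
        exact (DFinsupp.mem_support_iff.1 ht) (h2 t hcon)
      exact Submodule.mem_iSup_of_mem t (Submodule.mem_iSup_of_mem htS ⟨m t, h1 t, rfl⟩)
  refine ⟨D, ?_, fun m hm => ?_, fun m hm => ?_⟩
  · exact Submodule.fg_biSup S _ fun t _ => (hfg t).map _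
  · refine (hD m).2 ⟨fun t => hA t (by simpa using ⟨m, hm, rfl⟩), fun t ht => ?_⟩
    by_contra hcon
    exact ht (Finset.mem_biUnion.2 ⟨m, hm, DFinsupp.mem_support_iff.2 hcon⟩)
  · rw [hD] at hm ⊢
    exact ⟨fun t => hpure t _ (hm.1 t), fun t ht => hp t _ (hm.2 t ht)⟩

section FieldCoefficients

open TensorProduct

variable {R k : Type*} [CommRing R] [IsDomain R] [IsPrincipalIdealRing R] [Field k] [Algebra R k]
  {M : Type*} [AddCommGroup M] [Module R M]

theorem baseChange_subtype_injective (N : Submodule R M) [Module.IsTorsionFree R (M ⧸ N)] :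
    Function.Injective (N.subtype.baseChange k) :=
  LinearMap.lTensor_injective_of_exact_of_flat N.mkQ N.mkQ_surjective N.subtype
    N.injective_subtype (LinearMap.exact_subtype_mkQ N) k

/-- Homomorphisms into a field extend from pure submodules. -/
theorem exists_extend_to_field (N : Submodule R M) [Module.IsTorsionFree R (M ⧸ N)]
    (φ : N →ₗ[R] k) : ∃ χ : M →ₗ[R] k, ∀ x : N, χ x = φ x := by
  obtain ⟨l, hl⟩ := LinearMap.exists_leftInverse_of_injective (N.subtype.baseChange k)
    (LinearMap.ker_eq_bot.2 (baseChange_subtype_injective N))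
  refine ⟨(φ.liftBaseChange k ∘ₗ l).restrictScalars R ∘ₗ TensorProduct.mk R k M 1, fun x => ?_⟩
  have := congr($hl (1 ⊗ₜ[R] x))
  simp only [LinearMap.comp_apply, LinearMap.baseChange_tmul, Submodule.subtype_apply,
    LinearMap.id_apply] at this
  simp [this]

end FieldCoefficients

section AlgebraicIndependence

variable {K L W : Type*} [Field K] [Field L] [Algebra K L] [AddCommGroup W] [Module K W]

theorem AlgebraicIndependent.of_basis_change {ι ι' : Type*} (b : Module.Basis ι K W)
    (b' : Module.Basis ι' K W) (θ : W →ₗ[K] L) (h : AlgebraicIndependent K fun i => θ (b i)) :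
    AlgebraicIndependent K fun i => θ (b' i) := by
  let lin : W →ₗ[K] MvPolynomial ι K := b.constr K MvPolynomial.X
  let lin' : W →ₗ[K] MvPolynomial ι' K := b'.constr K MvPolynomial.X
  let Φ : MvPolynomial ι' K →ₐ[K] MvPolynomial ι K := MvPolynomial.aeval fun j => lin (b' j)
  let Ψ : MvPolynomial ι K →ₐ[K] MvPolynomial ι' K := MvPolynomial.aeval fun i => lin' (b i)
  have hΨ : Ψ.toLinearMap ∘ₗ lin = lin' := b.ext fun i => by simp [lin, Ψ]
  have hΨΦ : Ψ.comp Φ = AlgHom.id K _ := by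
    ext j : 1
    have := congr($hΨ (b' j))
    simpa [Φ, lin'] using this
  have hΦ : Function.Injective Φ := by
    refine Function.LeftInverse.injective (g := Ψ) fun x => ?_
    exact congr($hΨΦ x)
  have hθ : (MvPolynomial.aeval fun i => θ (b i)).toLinearMap ∘ₗ lin = θ :=
    b.ext fun i => by simp [lin]
  have hcomp : (MvPolynomial.aeval fun i => θ (b i)).comp Φ =
      MvPolynomial.aeval fun j => θ (b' j) := by
    ext j : 1
    have := congr($hθ (b' j))
    simpa [Φ] using this
  rw [algebraicIndependent_iff_injective_aeval] at h ⊢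
  rw [← hcomp]
  exact h.comp hΦ

theorem AlgebraicIndependent.of_linearIndependent {ι ι' : Type*} (b : Module.Basis ι K W)
    (θ : W →ₗ[K] L) (h : AlgebraicIndependent K fun i => θ (b i)) {w : ι' → W}
    (hw : LinearIndependent K w) : AlgebraicIndependent K fun i => θ (w i) := by
  let b' := Module.Basis.extend hw.linearIndepOn_id
  have h' := h.of_basis_change b b' θ
  have hmem : ∀ i, w i ∈ hw.linearIndepOn_id.extend (Set.subset_univ _) := fun i =>
    hw.linearIndepOn_id.subset_extend _ ⟨i, rfl⟩
  have := h'.comp (fun i => (⟨w i, hmem i⟩ : hw.linearIndepOn_id.extend (Set.subset_univ _)))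
    (fun i j hij => hw.injective (congrArg Subtype.val hij))
  simpa [b', Function.comp_def] using this

theorem AlgebraicIndependent.add_algebraMap {ι : Type*} {x : ι → L}
    (h : AlgebraicIndependent K x) (c : ι → K) :
    AlgebraicIndependent K fun i => algebraMap K L (c i) + x i := by
  let Φ (c : ι → K) : MvPolynomial ι K →ₐ[K] MvPolynomial ι K :=
    MvPolynomial.aeval fun i => MvPolynomial.C (c i) + MvPolynomial.X i
  have hΦ : Function.Injective (Φ c) := by
    refine Function.LeftInverse.injective (g := Φ (-c)) fun p => ?_
    have : (Φ (-c)).comp (Φ c) = AlgHom.id K _ := by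
      ext i : 1
      simp [Φ, ← add_assoc, MvPolynomial.algHom_C]
    exact congr($this p)
  have hcomp : (MvPolynomial.aeval x).comp (Φ c) =
      MvPolynomial.aeval fun i => algebraMap K L (c i) + x i := by
    ext i : 1
    simp [Φ]
  rw [algebraicIndependent_iff_injective_aeval] at h ⊢
  rw [← hcomp]
  exact h.comp hΦ

open TensorProduct in
/-- A homomorphism into a large field that sends bases of pure submodules to algebraically
independent families. -/
theorem exists_generic_linearMap {R M : Type*} [CommRing R] [IsDomain R] [IsPrincipalIdealRing R]
    [AddCommGroup M] [Module R M] [Algebra R K] [Algebra R L] [IsScalarTower R K L]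
    (y : M → L) (hy : AlgebraicIndependent K y) :
    ∃ θ : M →ₗ[R] L, ∀ A : Submodule R M, Module.IsTorsionFree R (M ⧸ A) →
      ∀ (ι : Type) (β : Module.Basis ι R A), AlgebraicIndependent K fun i => θ (β i) := by
  have hspan : ⊤ ≤ Submodule.span K (Set.range fun m : M => (1 : K) ⊗ₜ[R] m) := by
    rintro x -
    induction x using TensorProduct.induction_on with
    | zero => exact zero_mem _
    | add x y hx hy => exact add_mem hx hy
    | tmul a m =>
      rw [← mul_one a, ← smul_eq_mul, ← TensorProduct.smul_tmul']
      exact Submodule.smul_mem _ _ (Submodule.subset_span ⟨m, rfl⟩)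
  let b := Module.Basis.ofSpan hspan
  have hb : ∀ i, ∃ m : M, (1 : K) ⊗ₜ[R] m = b i := fun i =>
    Module.Basis.ofSpan_subset hspan ⟨i, rfl⟩
  choose m hm using hb
  have hinj : Function.Injective m := fun i j hij => b.injective (by rw [← hm, ← hm, hij])
  let Θ : K ⊗[R] M →ₗ[K] L := b.constr K (y ∘ m)
  have hΘ : AlgebraicIndependent K fun i => Θ (b i) := by
    simpa [Θ, Function.comp_def] using hy.comp m hinj
  refine ⟨Θ.restrictScalars R ∘ₗ TensorProduct.mk R K M 1, fun A hA ι β => ?_⟩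
  have hw : LinearIndependent K fun i => (1 : K) ⊗ₜ[R] (β i : M) := by
    have := (β.baseChange K).linearIndependent.map' (A.subtype.baseChange K)
      (LinearMap.ker_eq_bot.2 (baseChange_subtype_injective A))
    simpa [Function.comp_def] using this
  exact hΘ.of_linearIndependent b Θ hw

theorem exists_algebraicIndependent_of_card {k : Type} [Field k] (k₁ : Subfield k)
    {μ : Cardinal.{0}}
    (hμ : ℵ₀ ≤ μ) (h₁ : #k₁ ≤ μ) (hk : μ < #k) {J : Type} (hJ : #J ≤ μ) :
    ∃ y : J → k, AlgebraicIndependent k₁ y := by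
  obtain ⟨s, hs⟩ := exists_isTranscendenceBasis k₁ k
  have hcard : μ < #s := by
    by_contra! hcon
    have h1 : #(Algebra.adjoin k₁ s) ≤ μ :=
      (Algebra.cardinalMk_adjoin_le k₁ s).trans (max_le (max_le h₁ hcon) hμ)
    have halg := hs.isAlgebraic
    rw [Subtype.range_coe] at halg
    have := Algebra.IsAlgebraic.cardinalMk_le_max (Algebra.adjoin k₁ s) k
    exact hk.not_ge (this.trans (max_le h1 hμ))
  obtain ⟨e⟩ := hJ.trans hcard.le
  exact ⟨fun j => e j, hs.1.comp e e.injective⟩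

end AlgebraicIndependence

section PowerSeriesSubrings

open PowerSeries

variable {k : Type} [Field k]

/-- A subring of `k⟦X⟧` that contains `X` and is closed under those divisions that are possible
in `k⟦X⟧`. -/
structure IsDivisionClosed (R : Subring k⟦X⟧) : Prop where
  X_mem : (X : k⟦X⟧) ∈ R
  mem_of_mul_mem : ∀ ⦃t r : k⟦X⟧⦄, t ∈ R → t ≠ 0 → t * r ∈ R → r ∈ R

/-- The field `k`, on which a subring of `k⟦X⟧` acts through constant coefficients. The synonym
keeps this action apart from the multiplication action on `k⟦X⟧`. -/
def ResidueTarget (_ : Subring k⟦X⟧) : Type := k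

noncomputable instance (R : Subring k⟦X⟧) : Field (ResidueTarget R) := inferInstanceAs (Field k)

/-- The residue map makes `k` an algebra over every subring of `k⟦X⟧`. -/
noncomputable instance (R : Subring k⟦X⟧) : Algebra R (ResidueTarget R) :=
  (show R →+* k from constantCoeff.comp R.subtype).toAlgebra

/-- The residue map as a linear map over a subring. -/
noncomputable def residueMap (R : Subring k⟦X⟧) : k⟦X⟧ →ₗ[R] ResidueTarget R where
  toFun := constantCoeff
  map_add' := map_add _
  map_smul' r v := map_mul constantCoeff (r : k⟦X⟧) v

@[simp]
theorem residueMap_apply (R : Subring k⟦X⟧) (v : k⟦X⟧) : residueMap R v = constantCoeff v := rfl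

theorem eq_zero_of_forall_X_pow_dvd {v : k⟦X⟧} (h : ∀ n, (X : k⟦X⟧) ^ n ∣ v) : v = 0 := by
  ext n
  exact X_pow_dvd_iff.1 (h (n + 1)) n n.lt_succ_self

namespace IsDivisionClosed

variable {R : Subring k⟦X⟧}

/-- The indeterminate as an element of the subring. -/
noncomputable def unif (hR : IsDivisionClosed R) : R := ⟨X, hR.X_mem⟩

@[simp]
theorem coe_unif (hR : IsDivisionClosed R) : (hR.unif : k⟦X⟧) = X := rfl

theorem isUnit_of_constantCoeff_ne_zero (hR : IsDivisionClosed R) {r : R}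
    (h : constantCoeff (r : k⟦X⟧) ≠ 0) :
    IsUnit r := by
  have hr : (r : k⟦X⟧) * (r : k⟦X⟧)⁻¹ = 1 := PowerSeries.mul_inv_cancel _ h
  refine IsUnit.of_mul_eq_one ⟨(r : k⟦X⟧)⁻¹, hR.mem_of_mul_mem r.2 ?_ ?_⟩ (Subtype.ext hr)
  · rintro h0
    simp [h0] at h
  · rw [hr]
    exact one_mem _

theorem constantCoeff_ne_zero_of_isUnit {r : R} (h : IsUnit r) :
    constantCoeff (r : k⟦X⟧) ≠ 0 :=
  ((h.map R.subtype).map (constantCoeff (R := k))).ne_zero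

theorem irreducible_unif (hR : IsDivisionClosed R) : Irreducible hR.unif := by
  refine ⟨fun h => constantCoeff_ne_zero_of_isUnit h (by simp), fun {a b} hab => ?_⟩
  have h1 : (X : k⟦X⟧) = a * b := congrArg Subtype.val hab
  rcases (X_irreducible (R := k)).isUnit_or_isUnit h1 with h | h
  · exact Or.inl (hR.isUnit_of_constantCoeff_ne_zero (h.map (constantCoeff (R := k))).ne_zero)
  · exact Or.inr (hR.isUnit_of_constantCoeff_ne_zero (h.map (constantCoeff (R := k))).ne_zero)

theorem isDiscreteValuationRing (hR : IsDivisionClosed R) : IsDiscreteValuationRing R := by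
  refine IsDiscreteValuationRing.ofHasUnitMulPowIrreducibleFactorization
    ⟨hR.unif, hR.irreducible_unif, fun {r} hr => ?_⟩
  have hr' : (r : k⟦X⟧) ≠ 0 := fun h => hr (Subtype.ext h)
  obtain ⟨n, u, hu⟩ := IsDiscreteValuationRing.eq_unit_mul_pow_irreducible hr'
    (X_irreducible (R := k))
  have hX : (X : k⟦X⟧) ^ n ∈ R := pow_mem hR.X_mem n
  have huR : (u : k⟦X⟧) ∈ R := hR.mem_of_mul_mem hX (pow_ne_zero n X_ne_zero)
    (by rw [mul_comm, ← hu]; exact r.2)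
  have hunit : IsUnit (⟨u, huR⟩ : R) :=
    hR.isUnit_of_constantCoeff_ne_zero (u.isUnit.map (constantCoeff (R := k))).ne_zero
  refine ⟨n, hunit.unit, Subtype.ext ?_⟩
  rw [hu, mul_comm]
  rfl

end IsDivisionClosed

theorem exists_linearMap_mul_X {R : Subring k⟦X⟧} {N : Type*} [AddCommMonoid N] [Module R N]
    (f : N →ₗ[R] k⟦X⟧) (h : ∀ x, constantCoeff (f x) = 0) :
    ∃ g : N →ₗ[R] k⟦X⟧, ∀ x, f x = X * g x := by
  choose g hg using fun x => X_dvd_iff.2 (h x)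
  refine ⟨{ toFun := g, map_add' := fun x y => ?_, map_smul' := fun r x => ?_ }, hg⟩
  · apply mul_left_cancel₀ (X_ne_zero (R := k))
    rw [mul_add, ← hg, ← hg, ← hg, map_add]
  · apply mul_left_cancel₀ (X_ne_zero (R := k))
    rw [← hg, map_smul, hg, Subring.smul_def, Subring.smul_def, smul_eq_mul, smul_eq_mul,
      RingHom.id_apply]
    ring

/-- Homomorphisms into the complete ring `k⟦X⟧` extend from pure submodules of free modules. -/
theorem exists_extend_to_powerSeries {R : Subring k⟦X⟧} (hR : IsDivisionClosed R) {J : Type*}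
    (K : Submodule R (J →₀ R)) [Module.IsTorsionFree R ((J →₀ R) ⧸ K)] (φ : K →ₗ[R] k⟦X⟧) :
    ∃ ψ : (J →₀ R) →ₗ[R] k⟦X⟧, ∀ x : K, ψ x = φ x := by
  have := hR.isDiscreteValuationRing
  have step : ∀ φ : K →ₗ[R] k⟦X⟧, ∃ (c : J → k) (φ' : K →ₗ[R] k⟦X⟧), ∀ x : K,
      φ x = Finsupp.linearCombination R (fun j => C (c j)) (x : J →₀ R) + X * φ' x := by
    intro φ
    obtain ⟨χ, hχ⟩ := exists_extend_to_field K (residueMap R ∘ₗ φ)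
    let lift : (J →₀ R) →ₗ[R] k⟦X⟧ :=
      Finsupp.linearCombination R fun j => C (χ (Finsupp.single j 1))
    have hlift : residueMap R ∘ₗ lift = χ := by
      ext j
      simp only [lift, LinearMap.comp_apply, Finsupp.lsingle_apply,
        Finsupp.linearCombination_single, one_smul]
      exact constantCoeff_C (R := k) _
    obtain ⟨φ', hφ'⟩ := exists_linearMap_mul_X (φ - lift ∘ₗ K.subtype) fun x => by
      have h1 := hχ x
      rw [← hlift] at h1
      simp only [LinearMap.comp_apply, residueMap_apply] at h1
      simp [h1]
    exact ⟨fun j => χ (Finsupp.single j 1), φ', fun x => by rw [← hφ']; simp [lift]⟩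
  choose c φ' hstep using step
  let Φ : ℕ → (K →ₗ[R] k⟦X⟧) := fun n => φ'^[n] φ
  have hΦ : ∀ n, Φ (n + 1) = φ' (Φ n) := fun n => Function.iterate_succ_apply' φ' n φ
  let ψ : ℕ → ((J →₀ R) →ₗ[R] k⟦X⟧) := fun n =>
    Finsupp.linearCombination R fun j => PowerSeries.mk fun i => c (Φ (n + i)) j
  have hψ : ∀ n f, ψ n f =
      Finsupp.linearCombination R (fun j => C (c (Φ n) j)) f + X * ψ (n + 1) f := by
    intro n f
    induction f using Finsupp.induction_linear with
    | zero => simp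
    | add f g hf hg => rw [map_add, hf, hg, map_add, map_add]; ring
    | single j r =>
      have : (PowerSeries.mk fun i => c (Φ (n + i)) j) =
          C (c (Φ n) j) + X * PowerSeries.mk fun i => c (Φ (n + 1 + i)) j := by
        ext i
        cases i with
        | zero => simp
        | succ i => simp [coeff_succ_X_mul, add_assoc, add_comm 1 i]
      simp only [ψ, Finsupp.linearCombination_single, Subring.smul_def, smul_eq_mul]
      rw [this]
      ring
  have hdvd : ∀ m n, ∀ x : K, (X : k⟦X⟧) ^ m ∣ ψ n x - Φ n x := by
    intro m
    induction m with
    | zero => simp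
    | succ m ih =>
      intro n x
      have : ψ n x - Φ n x = X * (ψ (n + 1) x - Φ (n + 1) x) := by
        rw [hψ, hstep (Φ n) x, hΦ]
        ring
      rw [this, pow_succ']
      exact mul_dvd_mul_left _ (ih _ _)
  exact ⟨ψ 0, fun x => sub_eq_zero.1 (eq_zero_of_forall_X_pow_dvd fun m => hdvd m 0 x)⟩

/-- Homomorphisms from torsion-free modules into the residue field lift to `k⟦X⟧`. -/
theorem exists_lift_residueMap {R : Subring k⟦X⟧} (hR : IsDivisionClosed R) {M : Type*}
    [AddCommGroup M] [Module R M] [Module.IsTorsionFree R M] (χ : M →ₗ[R] ResidueTarget R) :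
    ∃ θ : M →ₗ[R] k⟦X⟧, ∀ m, constantCoeff (θ m) = χ m := by
  let π : (M →₀ R) →ₗ[R] M := Finsupp.linearCombination R id
  have hπ : Function.Surjective π := Finsupp.linearCombination_surjective R Function.surjective_id
  have : Module.IsTorsionFree R ((M →₀ R) ⧸ LinearMap.ker π) :=
    (π.quotKerEquivOfSurjective hπ).injective.moduleIsTorsionFree _ (by simp)
  let lift : (M →₀ R) →ₗ[R] k⟦X⟧ := Finsupp.linearCombination R fun m => C (χ m)
  have hlift : residueMap R ∘ₗ lift = χ ∘ₗ π := by
    ext m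
    simp only [lift, π, LinearMap.comp_apply, Finsupp.lsingle_apply,
      Finsupp.linearCombination_single, one_smul]
    exact constantCoeff_C (R := k) _
  have hlift' : ∀ f, constantCoeff (lift f) = χ (π f) := fun f => congr($hlift f)
  obtain ⟨φ, hφ⟩ := exists_linearMap_mul_X (lift ∘ₗ (LinearMap.ker π).subtype) fun x => by
    have := x.2
    rw [LinearMap.mem_ker] at this
    rw [LinearMap.comp_apply, Submodule.subtype_apply, hlift', this, map_zero]
    rfl
  obtain ⟨ψ, hψ⟩ := exists_extend_to_powerSeries hR (LinearMap.ker π) φ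
  let Xψ : (M →₀ R) →ₗ[R] k⟦X⟧ := hR.unif • ψ
  have hXψ : ∀ f, Xψ f = X * ψ f := fun f => rfl
  have hker : LinearMap.ker π ≤ LinearMap.ker (lift - Xψ) := by
    intro f hf
    have h1 := hψ ⟨f, hf⟩
    have h2 := hφ ⟨f, hf⟩
    simp only [LinearMap.comp_apply, Submodule.subtype_apply] at h1 h2
    rw [LinearMap.mem_ker, LinearMap.sub_apply, hXψ, h1, h2, sub_self]
  refine ⟨(LinearMap.ker π).liftQ (lift - Xψ) hker ∘ₗ
    (π.quotKerEquivOfSurjective hπ).symm.toLinearMap, fun m => ?_⟩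
  obtain ⟨f, rfl⟩ := hπ m
  have : (π.quotKerEquivOfSurjective hπ).symm (π f) = (LinearMap.ker π).mkQ f := by
    rw [LinearEquiv.symm_apply_eq]; rfl
  rw [LinearMap.comp_apply, LinearEquiv.coe_coe, this, Submodule.mkQ_apply,
    Submodule.liftQ_apply, LinearMap.sub_apply, hXψ, map_sub, map_mul, constantCoeff_X, zero_mul,
    sub_zero, hlift']

end PowerSeriesSubrings

section DivisionClosure

open PowerSeries

variable {k : Type} [Field k]

/-- The subring of all quotients in `k⟦X⟧` of elements of a subring. -/
def divisionClosure (A : Subring k⟦X⟧) : Subring k⟦X⟧ where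
  carrier := {r | ∃ t ∈ A, t ≠ 0 ∧ t * r ∈ A}
  one_mem' := ⟨1, one_mem A, one_ne_zero, by simp [one_mem]⟩
  zero_mem' := ⟨1, one_mem A, one_ne_zero, by simp [zero_mem]⟩
  neg_mem' := by
    rintro r ⟨t, ht, h0, h⟩
    exact ⟨t, ht, h0, by rw [mul_neg]; exact neg_mem h⟩
  mul_mem' := by
    rintro r r' ⟨t, ht, h0, h⟩ ⟨t', ht', h0', h'⟩
    exact ⟨t * t', mul_mem ht ht', mul_ne_zero h0 h0', by
      rw [mul_mul_mul_comm]; exact mul_mem h h'⟩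
  add_mem' := by
    rintro r r' ⟨t, ht, h0, h⟩ ⟨t', ht', h0', h'⟩
    refine ⟨t * t', mul_mem ht ht', mul_ne_zero h0 h0', ?_⟩
    rw [show t * t' * (r + r') = t' * (t * r) + t * (t' * r') by ring]
    exact add_mem (mul_mem ht' h) (mul_mem ht h')

theorem le_divisionClosure (A : Subring k⟦X⟧) : A ≤ divisionClosure A :=
  fun r hr => ⟨1, one_mem A, one_ne_zero, by rwa [one_mul]⟩

theorem isDivisionClosed_divisionClosure {A : Subring k⟦X⟧} (hX : (X : k⟦X⟧) ∈ A) :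
    IsDivisionClosed (divisionClosure A) where
  X_mem := le_divisionClosure A hX
  mem_of_mul_mem := by
    rintro t r ⟨u, hu, hu0, hut⟩ ht ⟨v, hv, hv0, hvr⟩
    refine ⟨v * (u * t), mul_mem hv hut, mul_ne_zero hv0 (mul_ne_zero hu0 ht), ?_⟩
    rw [show v * (u * t) * r = u * (v * (t * r)) by ring]
    exact mul_mem hu hvr

theorem mk_divisionClosure_le {A : Subring k⟦X⟧} {μ : Cardinal.{0}} (hμ : ℵ₀ ≤ μ)
    (hA : #A ≤ μ) : #(divisionClosure A) ≤ μ := by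
  choose t ht h0 hr using fun r : divisionClosure A => r.2
  have hinj : Function.Injective fun r : divisionClosure A =>
      ((⟨t r, ht r⟩, ⟨t r * r, hr r⟩) : A × A) := by
    intro r r' h
    have h1 : t r = t r' := congrArg (fun q : A × A => (q.1 : k⟦X⟧)) h
    have h2 : t r * r = t r' * r' := congrArg (fun q : A × A => (q.2 : k⟦X⟧)) h
    rw [← h1] at h2
    exact Subtype.ext (mul_left_cancel₀ (h0 r) h2)
  calc #(divisionClosure A) ≤ #(A × A) := mk_le_of_injective hinj
    _ = #A * #A := by simp
    _ ≤ μ * μ := mul_le_mul' hA hA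
    _ = μ := mul_eq_self hμ

theorem X_pow_dvd_coeff_of_dvd_aeval {R : Subring k⟦X⟧} (hR : IsDivisionClosed R)
    {k₁ : Subfield k} (hk₁ : ∀ r ∈ R, constantCoeff r ∈ k₁) {ι : Type} {y : ι → k⟦X⟧}
    (hy : AlgebraicIndependent k₁ fun i => constantCoeff (y i)) (n : ℕ)
    (T : MvPolynomial ι R) (hT : (X : k⟦X⟧) ^ n ∣ MvPolynomial.aeval y T) (m : ι →₀ ℕ) :
    (X : k⟦X⟧) ^ n ∣ ((T.coeff m : R) : k⟦X⟧) := by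
  induction n generalizing T with
  | zero => simp
  | succ n ih =>
    let res : R →+* k₁ := (constantCoeff.comp R.subtype).codRestrict k₁ fun r => hk₁ r r.2
    have hres : (algebraMap k₁ k).comp res = constantCoeff.comp R.subtype := rfl
    have hmap : T.map res = 0 := by
      apply (injective_iff_map_eq_zero _).1 hy
      have h0 : constantCoeff (MvPolynomial.aeval y T) = 0 :=
        X_dvd_iff.1 ((dvd_pow_self _ n.succ_ne_zero).trans hT)
      rw [MvPolynomial.aeval_def, MvPolynomial.hom_eval₂] at h0
      rw [MvPolynomial.aeval_def, MvPolynomial.eval₂_map, hres]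
      exact h0
    have hdvd : MvPolynomial.C hR.unif ∣ T := by
      rw [MvPolynomial.C_dvd_iff_dvd_coeff]
      intro i
      have h0 : constantCoeff ((T.coeff i : R) : k⟦X⟧) = 0 := by
        have := congrArg (fun P => ((MvPolynomial.coeff i P : k₁) : k)) hmap
        rwa [MvPolynomial.coeff_map] at this
      obtain ⟨q, hq⟩ := X_dvd_iff.2 h0
      have hqR : q ∈ R := hR.mem_of_mul_mem hR.X_mem X_ne_zero (by rw [← hq]; exact (T.coeff i).2)
      exact ⟨⟨q, hqR⟩, Subtype.ext hq⟩
    obtain ⟨T', rfl⟩ := hdvd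
    have h1 : MvPolynomial.aeval y (MvPolynomial.C hR.unif * T') =
        X * MvPolynomial.aeval y T' := by
      rw [map_mul, MvPolynomial.aeval_C]; rfl
    rw [h1, pow_succ', mul_dvd_mul_iff_left X_ne_zero] at hT
    have h2 : ((MvPolynomial.coeff m (MvPolynomial.C hR.unif * T') : R) : k⟦X⟧) =
        X * ((T'.coeff m : R) : k⟦X⟧) := by
      rw [MvPolynomial.coeff_C_mul]; rfl
    rw [h2, pow_succ']
    exact mul_dvd_mul_left _ (ih T' hT)

theorem exists_finset_mem_adjoin {R A : Type*} [CommSemiring R] [CommSemiring A] [Algebra R A]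
    {Y : Set A} {x : A} (hx : x ∈ Algebra.adjoin R Y) :
    ∃ s : Finset A, (s : Set A) ⊆ Y ∧ x ∈ Algebra.adjoin R (s : Set A) := by
  classical
  induction hx using Algebra.adjoin_induction with
  | mem x hx => exact ⟨{x}, by simpa using hx, Algebra.subset_adjoin (by simp)⟩
  | algebraMap r => exact ⟨∅, by simp, Subalgebra.algebraMap_mem _ r⟩
  | add x y _ _ hx hy =>
    obtain ⟨s, hs, hx⟩ := hx
    obtain ⟨t, ht, hy⟩ := hy
    refine ⟨s ∪ t, by simp [hs, ht], add_mem (Algebra.adjoin_mono (by simp) hx)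
      (Algebra.adjoin_mono (by simp) hy)⟩
  | mul x y _ _ hx hy =>
    obtain ⟨s, hs, hx⟩ := hx
    obtain ⟨t, ht, hy⟩ := hy
    refine ⟨s ∪ t, by simp [hs, ht], mul_mem (Algebra.adjoin_mono (by simp) hx)
      (Algebra.adjoin_mono (by simp) hy)⟩

/-- Adjoining elements whose residues are generic over the residues of `R` does not add new limits
of sequences in `R`. -/
theorem notMem_divisionClosure_adjoin {R : Subring k⟦X⟧} (hR : IsDivisionClosed R) {b : k⟦X⟧}
    (hb : b ∉ R) (hlim : ∀ n : ℕ, ∃ c ∈ R, (X : k⟦X⟧) ^ n ∣ b - c)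
    {k₁ : Subfield k} (hk₁ : ∀ r ∈ R, constantCoeff r ∈ k₁) {Y : Set k⟦X⟧}
    (hY : ∀ s : Finset k⟦X⟧, (s : Set k⟦X⟧) ⊆ Y → ∃ (ι : Type) (y : ι → k⟦X⟧),
      AlgebraicIndependent k₁ (fun i => constantCoeff (y i)) ∧
      (s : Set k⟦X⟧) ⊆ Algebra.adjoin R (Set.range y)) :
    b ∉ divisionClosure (Algebra.adjoin R Y).toSubring := by
  classical
  rintro ⟨t, ht, ht0, htb⟩
  obtain ⟨s₁, hs₁, h₁⟩ := exists_finset_mem_adjoin (R := R) ht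
  obtain ⟨s₂, hs₂, h₂⟩ := exists_finset_mem_adjoin (R := R) htb
  obtain ⟨ι, y, hy, hs⟩ := hY (s₁ ∪ s₂) (by simp [hs₁, hs₂])
  rw [Finset.coe_union, Set.union_subset_iff] at hs
  have h₁' := Algebra.adjoin_le hs.1 h₁
  have h₂' := Algebra.adjoin_le hs.2 h₂
  rw [Algebra.adjoin_range_eq_range_aeval] at h₁' h₂'
  obtain ⟨Q, hQ⟩ := h₁'
  obtain ⟨P, hP⟩ := h₂'
  simp only [RingHom.coe_coe, AlgHom.toRingHom_eq_coe] at hQ hP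
  have hQ0 : Q ≠ 0 := by
    rintro rfl
    exact ht0 (by rw [← hQ, map_zero])
  obtain ⟨m, hm⟩ := MvPolynomial.ne_zero_iff.1 hQ0
  have key : ((Q.coeff m : R) : k⟦X⟧) * b = ((P.coeff m : R) : k⟦X⟧) := by
    refine sub_eq_zero.1 (eq_zero_of_forall_X_pow_dvd fun n => ?_)
    obtain ⟨c, hc, hbc⟩ := hlim n
    have h1 : MvPolynomial.aeval y (MvPolynomial.C (⟨c, hc⟩ : R) * Q - P) = -(t * (b - c)) := by
      rw [map_sub, map_mul, MvPolynomial.aeval_C, hQ, hP]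
      change c * t - t * b = _
      ring
    have h2 := X_pow_dvd_coeff_of_dvd_aeval hR hk₁ hy n (MvPolynomial.C (⟨c, hc⟩ : R) * Q - P)
      (by rw [h1]; exact (dvd_mul_of_dvd_right hbc t).neg_right) m
    have h3 : ((MvPolynomial.coeff m (MvPolynomial.C (⟨c, hc⟩ : R) * Q - P) : R) : k⟦X⟧) =
        c * ((Q.coeff m : R) : k⟦X⟧) - ((P.coeff m : R) : k⟦X⟧) := by
      rw [MvPolynomial.coeff_sub, MvPolynomial.coeff_C_mul]; rfl
    rw [h3] at h2
    have h4 : ((Q.coeff m : R) : k⟦X⟧) * b - ((P.coeff m : R) : k⟦X⟧) =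
        (c * ((Q.coeff m : R) : k⟦X⟧) - ((P.coeff m : R) : k⟦X⟧)) +
          ((Q.coeff m : R) : k⟦X⟧) * (b - c) := by ring
    rw [h4]
    exact dvd_add h2 (dvd_mul_of_dvd_right hbc _)
  exact hb (hR.mem_of_mul_mem (Q.coeff m).2 (fun h => hm (Subtype.ext h))
    (by rw [key]; exact (P.coeff m).2))

end DivisionClosure

section GoodSubrings

open PowerSeries

variable {k : Type} [Field k]

/-- A small division-closed subring of `k⟦X⟧` that does not contain `b`, although `b` is a limit of
elements of it. -/
structure IsGoodSubring (μ : Cardinal.{0}) (b : k⟦X⟧) (R : Subring k⟦X⟧) : Prop where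
  isDivisionClosed : IsDivisionClosed R
  notMem : b ∉ R
  exists_dvd_sub : ∀ n : ℕ, ∃ c ∈ R, (X : k⟦X⟧) ^ n ∣ b - c
  mk_le : #R ≤ μ

theorem IsGoodSubring.divisionClosure_adjoin {μ : Cardinal.{0}} {b : k⟦X⟧} {R : Subring k⟦X⟧}
    (hR : IsGoodSubring μ b R) (hμ : ℵ₀ ≤ μ) {k₁ : Subfield k}
    (hk₁ : ∀ r ∈ R, constantCoeff r ∈ k₁) {Y : Set k⟦X⟧} (hYμ : #Y ≤ μ)
    (hY : ∀ s : Finset k⟦X⟧, (s : Set k⟦X⟧) ⊆ Y → ∃ (ι : Type) (y : ι → k⟦X⟧),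
      AlgebraicIndependent k₁ (fun i => constantCoeff (y i)) ∧
      (s : Set k⟦X⟧) ⊆ Algebra.adjoin R (Set.range y)) :
    R ≤ divisionClosure (Algebra.adjoin R Y).toSubring ∧
      IsGoodSubring μ b (divisionClosure (Algebra.adjoin R Y).toSubring) := by
  have hle : R ≤ (Algebra.adjoin R Y).toSubring := fun r hr =>
    (Algebra.adjoin R Y).algebraMap_mem ⟨r, hr⟩
  have hle' := hle.trans (le_divisionClosure _)
  refine ⟨hle', isDivisionClosed_divisionClosure (hle hR.isDivisionClosed.X_mem),
    notMem_divisionClosure_adjoin hR.isDivisionClosed hR.notMem hR.exists_dvd_sub hk₁ hY,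
    fun n => ?_, mk_divisionClosure_le hμ ?_⟩
  · obtain ⟨c, hc, h⟩ := hR.exists_dvd_sub n
    exact ⟨c, hle' hc, h⟩
  · exact (Algebra.cardinalMk_adjoin_le R Y).trans (max_le (max_le hR.mk_le hYμ) hμ)

theorem exists_generic_semilinearMap {R M : Type*} [CommRing R] [IsDomain R]
    [IsPrincipalIdealRing R] [AddCommGroup M] [Module R M] (ρ : R →+* k) {k₁ : Subfield k}
    (hρ : ∀ r, ρ r ∈ k₁) (y : M → k) (hy : AlgebraicIndependent k₁ y) :
    ∃ θ : M →ₛₗ[ρ] k, ∀ A : Submodule R M, Module.IsTorsionFree R (M ⧸ A) →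
      ∀ (ι : Type) (β : Module.Basis ι R A), AlgebraicIndependent k₁ fun i => θ (β i) := by
  let : Algebra R k₁ := (ρ.codRestrict k₁ hρ).toAlgebra
  let : Algebra R k := ρ.toAlgebra
  have : IsScalarTower R k₁ k := .of_algebraMap_eq fun _ => rfl
  obtain ⟨θ, hθ⟩ := exists_generic_linearMap (R := R) y hy
  exact ⟨{ toFun := θ, map_add' := map_add θ, map_smul' := map_smul θ }, hθ⟩

theorem IsGoodSubring.exists_linearMap {μ : Cardinal.{0}} {b : k⟦X⟧} {R : Subring k⟦X⟧}
    (hR : IsGoodSubring μ b R) (hμ : ℵ₀ ≤ μ) (hμk : μ < #k)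
    {F M : Type} [AddCommGroup F] [Module R F] [AddCommGroup M] [Module R M]
    [Module.IsTorsionFree R M] (hM : HasFinitePureHulls M hR.isDivisionClosed.unif)
    (π : F →ₗ[R] M) (hπ : Function.Surjective π) (hF : #F ≤ μ) (Ψ : F →ₗ[R] k⟦X⟧)
    (hΨ : ∀ f, π f = 0 → Ψ f ∈ R) :
    ∃ R' : Subring k⟦X⟧, IsGoodSubring μ b R' ∧ R ≤ R' ∧ ∃ x : F →ₗ[R] k⟦X⟧,
      (∀ f, x f ∈ R') ∧ ∀ f, π f = 0 → x f = Ψ f := by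
  classical
  have := hR.isDivisionClosed.isDiscreteValuationRing
  let S : Set k := Set.range (fun r : R => constantCoeff (r : k⟦X⟧)) ∪
    Set.range fun f => constantCoeff (Ψ f)
  let k₁ : Subfield k := Subfield.closure S
  have hk₁R : ∀ r ∈ R, constantCoeff r ∈ k₁ := fun r hr =>
    Subfield.subset_closure (Or.inl ⟨⟨r, hr⟩, rfl⟩)
  have hk₁Ψ : ∀ f, constantCoeff (Ψ f) ∈ k₁ := fun f =>
    Subfield.subset_closure (Or.inr ⟨f, rfl⟩)
  have hk₁ : #k₁ ≤ μ := by
    refine (Subfield.cardinalMk_closure_le_max S).trans (max_le ?_ hμ)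
    refine (mk_union_le _ _).trans ?_
    rw [← add_eq_self hμ]
    exact add_le_add (mk_range_le.trans hR.mk_le) (mk_range_le.trans hF)
  obtain ⟨y, hy⟩ := exists_algebraicIndependent_of_card (J := M) k₁ hμ hk₁ hμk
    ((mk_le_of_surjective hπ).trans hF)
  obtain ⟨χ, hχ⟩ := exists_generic_semilinearMap (constantCoeff.comp R.subtype)
    (fun r => hk₁R r r.2) y hy
  obtain ⟨θ, hθ⟩ := exists_lift_residueMap hR.isDivisionClosed
    { toFun := χ, map_add' := map_add χ, map_smul' := χ.map_smulₛₗ }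
  replace hθ : ∀ m, constantCoeff (θ m) = χ m := hθ
  let x : F →ₗ[R] k⟦X⟧ := Ψ + θ ∘ₗ π
  have hx : ∀ f, x f = Ψ f + θ (π f) := fun f => rfl
  have hxker : ∀ f, π f = 0 → x f = Ψ f := fun f hf => by rw [hx, hf, map_zero, add_zero]
  obtain ⟨hle, hgood⟩ := hR.divisionClosure_adjoin hμ hk₁R (Y := Set.range x)
    (mk_range_le.trans hF) fun s hs => by
      obtain ⟨t, ht⟩ : ∃ t : Finset F, t.image x = s := by
        rw [← Set.image_univ, Finset.subset_set_image_iff] at hs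
        obtain ⟨t, -, ht⟩ := hs
        exact ⟨t, ht⟩
      obtain ⟨A, hA, htA, hpure⟩ := hM (t.image π)
      have htf : Module.IsTorsionFree R (M ⧸ A) :=
        isTorsionFree_quotient hR.isDivisionClosed.irreducible_unif hpure
      have : Module.Finite R A := Module.Finite.iff_fg.2 hA
      let β := Module.finBasis R A
      choose f' hf' using fun j => hπ (β j)
      refine ⟨_, fun j => x (f' j), ?_, ?_⟩
      · have := (hχ A htf _ β).add_algebraMap fun j => (⟨_, hk₁Ψ (f' j)⟩ : k₁)
        convert this using 2 with j
        change constantCoeff (x (f' j)) = _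
        rw [hx, map_add, hf', hθ]
        rfl
      · rw [← ht, Finset.coe_image]
        rintro _ ⟨f, hf, rfl⟩
        have hfA : π f ∈ A := htA (by simpa using ⟨f, hf, rfl⟩)
        let r := β.repr ⟨π f, hfA⟩
        have hker : π (f - ∑ j, r j • f' j) = 0 := by
          have h1 := congrArg Subtype.val (β.sum_repr ⟨π f, hfA⟩)
          simp only [Submodule.coe_sum, Submodule.coe_smul] at h1
          rw [map_sub, map_sum, sub_eq_zero, ← h1]
          exact Finset.sum_congr rfl fun j _ => by rw [map_smul, hf']
        have h2 : x f = Ψ (f - ∑ j, r j • f' j) + ∑ j, r j • x (f' j) := by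
          rw [← hxker _ hker, map_sub, map_sum, sub_add_eq_add_sub, eq_sub_iff_add_eq]
          simp only [map_smul]
        rw [h2]
        refine add_mem ?_ (sum_mem fun j _ => ?_)
        · exact Subalgebra.algebraMap_mem _ (⟨_, hΨ _ hker⟩ : R)
        · exact Subalgebra.smul_mem _ (Algebra.subset_adjoin (Set.mem_range_self j)) _
  exact ⟨_, hgood, hle, x, fun f => le_divisionClosure _ (Algebra.subset_adjoin ⟨f, rfl⟩), hxker⟩

end GoodSubrings

section Systems

open PowerSeries
open scoped DirectSum

variable {k : Type} [Field k]

theorem mk_finsupp_le {α β : Type} [Zero β] {μ : Cardinal.{0}} (hμ : ℵ₀ ≤ μ) (hα : #α ≤ μ)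
    (hβ : #β ≤ μ) : #(α →₀ β) ≤ μ := by
  classical
  calc #(α →₀ β) ≤ #(Finset (α × β)) := mk_le_of_injective (Finsupp.graph_injective α β)
    _ ≤ #(List (α × β)) := mk_le_of_surjective (f := List.toFinset) List.toFinset_surjective
    _ ≤ max ℵ₀ #(α × β) := mk_list_le_max _
    _ ≤ μ := max_le hμ (by
      rw [mk_prod, lift_id, lift_id, ← mul_eq_self hμ]
      exact mul_le_mul' hα hβ)

theorem toModule_mem {R T V : Type*} [DecidableEq T] [CommRing R] {N : T → Type*}
    [∀ t, AddCommGroup (N t)] [∀ t, Module R (N t)] [AddCommGroup V] [Module R V]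
    {S : Submodule R V} (ψ : ∀ t, N t →ₗ[R] V) (f : ⨁ t, N t) (h : ∀ t, ψ t (f t) ∈ S) :
    DirectSum.toModule R T V ψ f ∈ S := by
  classical
  rw [← DirectSum.sum_support_of f, map_sum]
  refine sum_mem fun t _ => ?_
  rw [← DirectSum.lof_eq_of R, DirectSum.toModule_lof]
  exact h t

/-- The inhomogeneous linear system with rows `g` and right hand side `a` over `R` has a solution
in `k⟦X⟧`, and the module presented by `g` is torsion-free with finite pure hulls. -/
structure IsAdmissibleSystem {I : Type} {R : Subring k⟦X⟧} (p : R) (g : I → I →₀ R) (a : I → R) :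
    Prop where
  eq_zero_of_smul : ∀ m : (I →₀ R) ⧸ Submodule.span R (Set.range g), p • m = 0 → m = 0
  hasFinitePureHulls : HasFinitePureHulls ((I →₀ R) ⧸ Submodule.span R (Set.range g)) p
  exists_linearMap : ∃ ψ : (I →₀ R) →ₗ[R] k⟦X⟧, ∀ i, ψ (g i) = a i

theorem IsGoodSubring.exists_solving {μ : Cardinal.{0}} {b : k⟦X⟧} {R : Subring k⟦X⟧}
    (hR : IsGoodSubring μ b R) (hμ : ℵ₀ ≤ μ) (hμk : μ < #k) (I : Type) (hI : μ ^ #I ≤ μ) :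
    ∃ R' : Subring k⟦X⟧, IsGoodSubring μ b R' ∧ R ≤ R' ∧
      ∀ (g : I → I →₀ R) (a : I → R), IsAdmissibleSystem hR.isDivisionClosed.unif g a →
        ∃ x : I → k⟦X⟧, (∀ i, x i ∈ R') ∧ ∀ i, Finsupp.linearCombination R x (g i) = a i := by
  classical
  have := hR.isDivisionClosed.isDiscreteValuationRing
  set p := hR.isDivisionClosed.unif with hp
  have hIμ : #I ≤ μ := (cantor #I).le.trans
    ((power_le_power_right ((natCast_lt_aleph0 (n := 2)).le.trans hμ)).trans hI)
  have hIR : #(I →₀ R) ≤ μ := mk_finsupp_le hμ hIμ hR.mk_le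
  let T := {q : (I → I →₀ R) × (I → R) // IsAdmissibleSystem p q.1 q.2}
  have hT : #T ≤ μ := by
    refine (mk_subtype_le _).trans ?_
    rw [mk_prod, lift_id, lift_id, ← mul_eq_self hμ]
    refine mul_le_mul' ?_ ?_ <;> rw [mk_pi, prod_const, lift_id, lift_id]
    · exact (power_le_power_right hIR).trans hI
    · exact (power_le_power_right hR.mk_le).trans hI
  let M : T → Type := fun t => (I →₀ R) ⧸ Submodule.span R (Set.range t.1.1)
  let : ∀ t, AddCommGroup (M t) := fun t => inferInstanceAs
    (AddCommGroup ((I →₀ R) ⧸ Submodule.span R (Set.range t.1.1)))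
  let : ∀ t, Module R (M t) := fun t => inferInstanceAs
    (Module R ((I →₀ R) ⧸ Submodule.span R (Set.range t.1.1)))
  have htf : ∀ t, ∀ m : M t, p • m = 0 → m = 0 := fun t => t.2.eq_zero_of_smul
  have : Module.IsTorsionFree R (⨁ t, M t) := by
    refine isTorsionFree_of_irreducible hR.isDivisionClosed.irreducible_unif fun m hm => ?_
    refine DFinsupp.ext fun t => htf t _ ?_
    rw [← DirectSum.smul_apply, hm]
    rfl
  have hhull : HasFinitePureHulls (⨁ t, M t) p :=
    HasFinitePureHulls.directSum htf fun t => t.2.hasFinitePureHulls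
  choose ψ hψ using fun t : T => t.2.exists_linearMap
  let F := ⨁ _ : T, (I →₀ R)
  let mk : ∀ t, (I →₀ R) →ₗ[R] M t := fun t => (Submodule.span R (Set.range t.1.1)).mkQ
  have hmk : ∀ t f, mk t f = 0 → ψ t f ∈ R := by
    intro t f hf
    have hf' : f ∈ Submodule.span R (Set.range t.1.1) := (Submodule.Quotient.mk_eq_zero _).1 hf
    have hle : Submodule.span R (Set.range t.1.1) ≤
        (LinearMap.range (Algebra.linearMap R k⟦X⟧)).comap (ψ t) := by
      rw [Submodule.span_le]
      rintro _ ⟨i, rfl⟩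
      exact ⟨t.1.2 i, (hψ t i).symm⟩
    obtain ⟨r, hr⟩ := hle hf'
    rw [← hr]
    exact r.2
  let π : F →ₗ[R] ⨁ t, M t := DirectSum.lmap mk
  let Ψ : F →ₗ[R] k⟦X⟧ := DirectSum.toModule R T _ ψ
  have hπ : Function.Surjective π :=
    (DirectSum.lmap_surjective mk).2 fun t => Submodule.mkQ_surjective _
  have hF : #F ≤ μ := by
    rw [mk_congr (finsuppLEquivDirectSum R (I →₀ R) T).symm.toEquiv]
    exact mk_finsupp_le hμ hT hIR
  have hΨ : ∀ f, π f = 0 → Ψ f ∈ R := by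
    intro f hf
    obtain ⟨r, hr⟩ := toModule_mem (S := LinearMap.range (Algebra.linearMap R k⟦X⟧)) ψ f fun t =>
      ⟨⟨_, hmk t (f t) (DFunLike.congr_fun hf t)⟩, rfl⟩
    exact hr ▸ r.2
  obtain ⟨R', hR', hle, x, hxR', hx⟩ := hR.exists_linearMap hμ hμk hhull π hπ hF Ψ hΨ
  refine ⟨R', hR', hle, fun g a h => ?_⟩
  let t : T := ⟨(g, a), h⟩
  let ε : (I →₀ R) →ₗ[R] F := DirectSum.lof R T (fun _ => I →₀ R) t
  refine ⟨fun i => x (ε (Finsupp.single i 1)), fun i => hxR' _, fun i => ?_⟩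
  have h1 : Finsupp.linearCombination R (fun i => x (ε (Finsupp.single i 1))) = x ∘ₗ ε := by
    ext j
    simp
  have h2 : π (ε (g i)) = 0 := by
    have h3 : mk t (g i) = 0 :=
      (Submodule.Quotient.mk_eq_zero _).2 (Submodule.subset_span ⟨i, rfl⟩)
    have h4 : π (ε (g i)) = DirectSum.lof R T M t (mk t (g i)) := DirectSum.lmap_lof _ _ _
    rw [h4, h3, map_zero]
  rw [h1, LinearMap.comp_apply, hx _ h2]
  have h5 : Ψ (ε (g i)) = ψ t (g i) :=
    DirectSum.toModule_lof (M := fun _ : T => I →₀ R) (φ := ψ) R t (g i)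
  exact h5.trans (hψ t i)

end Systems

section Chains

open PowerSeries

variable {k : Type} [Field k]

theorem mk_iUnion_le_of_le {α ι : Type} {f : ι → Set α} {μ : Cardinal.{0}} (hμ : ℵ₀ ≤ μ)
    (hι : #ι ≤ μ) (hf : ∀ i, #(f i) ≤ μ) : #(⋃ i, f i) ≤ μ := by
  refine (mk_iUnion_le f).trans ?_
  rw [← mul_eq_self hμ]
  exact mul_le_mul' hι (ciSup_le' hf)

/-- Every family of at most `κ` elements of the cardinal `κ⁺` has a strict upper bound. -/
theorem exists_forall_lt_of_mk_le {κ : Cardinal.{0}} (hκ : ℵ₀ ≤ κ) {J : Type} (hJ : #J ≤ κ)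
    (f : J → (Order.succ κ).ord.ToType) : ∃ a, ∀ j, f j < a := by
  by_contra! h
  have huniv : (⋃ j, Set.Iic (f j)) = Set.univ :=
    Set.eq_univ_of_forall fun a => Set.mem_iUnion.2 (h a)
  have hcard : #(⋃ j, Set.Iic (f j)) ≤ κ := by
    refine mk_iUnion_le_of_le hκ hJ fun j => ?_
    rw [← Set.Iio_insert]
    refine mk_insert_le.trans (add_le_of_le hκ ?_ (one_le_aleph0.trans hκ))
    exact Order.lt_succ_iff.1 (by simpa using mk_Iio_lt (f j))
  rw [huniv, mk_univ, mk_ord_toType] at hcard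
  exact (Order.lt_succ κ).not_ge hcard

theorem IsGoodSubring.iSup {μ : Cardinal.{0}} (hμ : ℵ₀ ≤ μ) {b : k⟦X⟧} {ι : Type} [Nonempty ι]
    (hι : #ι ≤ μ) {c : ι → Subring k⟦X⟧} (hdir : Directed (· ≤ ·) c)
    (h : ∀ i, IsGoodSubring μ b (c i)) : IsGoodSubring μ b (⨆ i, c i) where
  isDivisionClosed :=
    { X_mem := (Subring.mem_iSup_of_directed hdir).2
        ⟨Classical.arbitrary ι, (h _).isDivisionClosed.X_mem⟩
      mem_of_mul_mem := by
        intro t r ht ht0 htr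
        obtain ⟨i, hi⟩ := (Subring.mem_iSup_of_directed hdir).1 ht
        obtain ⟨j, hj⟩ := (Subring.mem_iSup_of_directed hdir).1 htr
        obtain ⟨l, hil, hjl⟩ := hdir i j
        exact (Subring.mem_iSup_of_directed hdir).2
          ⟨l, (h l).isDivisionClosed.mem_of_mul_mem (hil hi) ht0 (hjl hj)⟩ }
  notMem hb := by
    obtain ⟨i, hi⟩ := (Subring.mem_iSup_of_directed hdir).1 hb
    exact (h i).notMem hi
  exists_dvd_sub n := by
    obtain ⟨r, hr, hd⟩ := (h (Classical.arbitrary ι)).exists_dvd_sub n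
    exact ⟨r, le_iSup c _ hr, hd⟩
  mk_le := by
    change #((⨆ i, c i : Subring k⟦X⟧) : Set k⟦X⟧) ≤ μ
    rw [Subring.coe_iSup_of_directed hdir]
    exact mk_iUnion_le_of_le hμ hι fun i => (h i).mk_le

/-- Iterating an inflationary operation on good subrings transfinitely. -/
theorem exists_chain_of_goodSubrings {μ : Cardinal.{0}} (hμ : ℵ₀ ≤ μ) {b : k⟦X⟧}
    {A : Type} [LinearOrder A] [WellFoundedLT A] (hA : #A ≤ μ) {R₀ : Subring k⟦X⟧}
    (hR₀ : IsGoodSubring μ b R₀) (next : Subring k⟦X⟧ → Subring k⟦X⟧) (hle : ∀ R, R ≤ next R)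
    (hnext : ∀ R, IsGoodSubring μ b R → IsGoodSubring μ b (next R)) :
    ∃ c : A → Subring k⟦X⟧, Monotone c ∧ (∀ a, IsGoodSubring μ b (c a)) ∧
      ∀ a, ∃ S, IsGoodSubring μ b S ∧ R₀ ≤ S ∧ (∀ a' < a, c a' ≤ S) ∧ next S = c a := by
  let stage (a : A) (c : ∀ a', a' < a → Subring k⟦X⟧) : Subring k⟦X⟧ :=
    ⨆ o : Option (Set.Iio a), o.elim R₀ fun a' => c a' a'.2
  let c : A → Subring k⟦X⟧ := WellFoundedLT.fix fun a c => next (stage a c)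
  have hc : ∀ a, c a = next (stage a fun a' _ => c a') := fun a => WellFoundedLT.fix_eq _ a
  have hR₀s : ∀ a, R₀ ≤ stage a fun a' _ => c a' := fun a =>
    le_iSup (fun o : Option (Set.Iio a) => o.elim R₀ fun a' => c a') none
  have hcs : ∀ a, ∀ a' < a, c a' ≤ stage a fun a' _ => c a' := fun a a' h =>
    le_iSup (fun o : Option (Set.Iio a) => o.elim R₀ fun a' => c a') (some ⟨a', h⟩)
  have hsc : ∀ a, (stage a fun a' _ => c a') ≤ c a := fun a => by
    rw [hc a]
    exact hle _
  have hmono : Monotone c := by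
    intro a' a h
    rcases h.eq_or_lt with rfl | h
    · exact le_rfl
    · exact (hcs a a' h).trans (hsc a)
  have hgood : ∀ a, IsGoodSubring μ b (stage a fun a' _ => c a') := by
    intro a
    induction a using WellFoundedLT.induction with
    | ind a ih =>
      refine IsGoodSubring.iSup hμ ?_ ?_ ?_
      · rw [mk_option]
        exact add_le_of_le hμ ((mk_set_le _).trans hA) (one_le_aleph0.trans hμ)
      · rintro (_ | x) (_ | y)
        · exact ⟨none, le_rfl, le_rfl⟩
        · exact ⟨some y, (hR₀s y).trans (hsc y), le_rfl⟩
        · exact ⟨some x, le_rfl, (hR₀s x).trans (hsc x)⟩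
        · rcases le_total x y with h | h
          · exact ⟨some y, hmono h, le_rfl⟩
          · exact ⟨some x, le_rfl, hmono h⟩
      · rintro (_ | x)
        · exact hR₀
        · change IsGoodSubring μ b (c x)
          rw [hc]
          exact hnext _ (ih x x.2)
  exact ⟨c, hmono, fun a => by rw [hc]; exact hnext _ (hgood a),
    fun a => ⟨_, hgood a, hR₀s a, hcs a, (hc a).symm⟩⟩

theorem IsGoodSubring.exists_saturated {κ : Cardinal.{0}} (hκ : ℵ₀ ≤ κ) {b : k⟦X⟧}
    (hk : 2 ^ κ < #k) {I : Type} (hI : #I = κ) {R₀ : Subring k⟦X⟧}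
    (hR₀ : IsGoodSubring (2 ^ κ) b R₀) :
    ∃ R, IsGoodSubring (2 ^ κ) b R ∧ R₀ ≤ R ∧ ∀ (J : Type), #J ≤ κ → ∀ v : J → R,
      ∃ (S : Subring k⟦X⟧) (hS : IsGoodSubring (2 ^ κ) b S), S ≤ R ∧
        (∀ j, (v j : k⟦X⟧) ∈ S) ∧ ∀ (g : I → I →₀ S) (a : I → S),
          IsAdmissibleSystem hS.isDivisionClosed.unif g a →
          ∃ x : I → k⟦X⟧, (∀ i, x i ∈ R) ∧ ∀ i, Finsupp.linearCombination S x (g i) = a i := by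
  classical
  have hμ : ℵ₀ ≤ (2 : Cardinal.{0}) ^ κ := hκ.trans (cantor κ).le
  have hIμ : ((2 : Cardinal.{0}) ^ κ) ^ #I ≤ 2 ^ κ := by
    rw [hI, ← power_mul, mul_eq_self hκ]
  choose next hnext hle hsolve using fun (R : Subring k⟦X⟧) (hR : IsGoodSubring (2 ^ κ) b R) =>
    hR.exists_solving hμ hk I hIμ
  let A := (Order.succ κ).ord.ToType
  have hA : #A ≤ 2 ^ κ := by
    rw [mk_ord_toType]
    exact Order.succ_le_of_lt (cantor κ)
  obtain ⟨c, hmono, hgood, hc⟩ := exists_chain_of_goodSubrings hμ (A := A) hA hR₀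
    (fun R => if hR : IsGoodSubring (2 ^ κ) b R then next R hR else R)
    (fun R => by
      split_ifs with h
      · exact hle R h
      · exact le_rfl)
    (fun R hR => by rw [dif_pos hR]; exact hnext R hR)
  have hdir : Directed (· ≤ ·) c := hmono.directed_le
  have : Nonempty A := by
    rw [← mk_ne_zero_iff, mk_ord_toType]
    exact (Order.bot_lt_succ κ).ne'
  have hcsup : ∀ a, c a ≤ ⨆ a, c a := le_iSup c
  refine ⟨⨆ a, c a, IsGoodSubring.iSup hμ hA hdir hgood, ?_, fun J hJ v => ?_⟩
  · obtain ⟨S, hS, h0, -, h⟩ := hc (Classical.arbitrary A)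
    rw [dif_pos hS] at h
    exact (h0.trans (hle S hS)).trans (h ▸ hcsup _)
  · choose f hf using fun j => (Subring.mem_iSup_of_directed hdir).1 (v j).2
    obtain ⟨a, ha⟩ := exists_forall_lt_of_mk_le hκ hJ f
    obtain ⟨S, hS, -, hcS, h⟩ := hc a
    rw [dif_pos hS] at h
    have hle' : next S hS ≤ ⨆ a, c a := h ▸ hcsup a
    refine ⟨S, hS, (hle S hS).trans hle', fun j => hcS _ (ha j) (hf j), fun g r hgr => ?_⟩
    obtain ⟨x, hx, hxg⟩ := hsolve S hS g r hgr
    exact ⟨x, fun i => hle' (hx i), hxg⟩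

end Chains

section Construction

open PowerSeries

variable {k : Type} [Field k]

/-- The countable subring of rational power series over the prime ring is good for some `b`. -/
theorem exists_isGoodSubring {μ : Cardinal.{0}} (hμ : ℵ₀ ≤ μ) :
    ∃ (b : k⟦X⟧) (R : Subring k⟦X⟧), IsGoodSubring μ b R := by
  classical
  let A : Subring k⟦X⟧ := Subring.closure {X}
  have hX : (X : k⟦X⟧) ∈ A := Subring.subset_closure rfl
  have hA : #A ≤ ℵ₀ := by
    have hle : A ≤ (Polynomial.aeval (R := ℤ) (X : k⟦X⟧)).toRingHom.range :=
      Subring.closure_le.2 (Set.singleton_subset_iff.2 ⟨Polynomial.X, Polynomial.aeval_X _⟩)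
    refine (mk_le_of_injective (Subring.inclusion_injective hle)).trans ?_
    exact mk_range_le.trans (by simp)
  have hR := mk_divisionClosure_le le_rfl hA
  let f : Set ℕ → k⟦X⟧ := fun s => PowerSeries.mk fun n => if n ∈ s then 1 else 0
  have hf : Function.Injective f := by
    intro s t h
    ext n
    have := congrArg (coeff n) h
    simp only [f, coeff_mk] at this
    by_cases hs : n ∈ s <;> by_cases ht : n ∈ t <;> simp_all
  obtain ⟨s, hs⟩ : ∃ s, f s ∉ divisionClosure A := by
    by_contra! h
    have h1 : #(Set ℕ) ≤ ℵ₀ :=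
      (mk_le_of_injective (f := fun s => (⟨f s, h s⟩ : divisionClosure A))
        fun s t hst => hf (congrArg Subtype.val hst)).trans hR
    rw [mk_set, mk_nat] at h1
    exact (cantor ℵ₀).not_ge h1
  refine ⟨f s, divisionClosure A, isDivisionClosed_divisionClosure hX, hs, fun n => ?_,
    hR.trans hμ⟩
  refine ⟨∑ i ∈ Finset.range n, if i ∈ s then X ^ i else 0, sum_mem fun i _ => ?_, ?_⟩
  · split_ifs
    · exact pow_mem (le_divisionClosure A hX) i
    · exact zero_mem _
  · rw [X_pow_dvd_iff]
    intro m hm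
    have : ∀ i, coeff m (if i ∈ s then (X : k⟦X⟧) ^ i else 0) =
        if m = i then (if m ∈ s then 1 else 0) else 0 := by
      intro i
      split_ifs <;> simp_all [coeff_X_pow]
    simp [f, map_sum, this, hm]

theorem exists_isGoodSubring_mk_eq {μ : Cardinal.{0}} (hμ : ℵ₀ ≤ μ) (hμk : μ < #k) :
    ∃ (b : k⟦X⟧) (R : Subring k⟦X⟧), IsGoodSubring μ b R ∧ #R = μ := by
  obtain ⟨b, R, hR⟩ := exists_isGoodSubring (k := k) hμ
  let S : Set k := Set.range fun r : R => constantCoeff (r : k⟦X⟧)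
  have hS : #S ≤ μ := mk_range_le.trans hR.mk_le
  let k₁ : Subfield k := Subfield.closure S
  have hk₁ : ∀ r ∈ R, constantCoeff r ∈ k₁ := fun r hr =>
    Subfield.subset_closure ⟨⟨r, hr⟩, rfl⟩
  have hcard : #k₁ ≤ μ := (Subfield.cardinalMk_closure_le_max S).trans (max_le hS hμ)
  obtain ⟨y, hy⟩ := exists_algebraicIndependent_of_card (J := μ.out) k₁ hμ hcard hμk (by simp)
  have hinj : Function.Injective fun j => (C (y j) : k⟦X⟧) :=
    C_injective.comp hy.injective
  obtain ⟨-, h⟩ := hR.divisionClosure_adjoin hμ hk₁ (Y := Set.range fun j => C (y j))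
    (mk_range_le.trans (by simp)) fun s hs =>
      ⟨μ.out, fun j => C (y j), by simpa using hy, hs.trans Algebra.subset_adjoin⟩
  refine ⟨b, _, h, h.mk_le.antisymm ?_⟩
  have h1 := mk_le_of_injective (α := μ.out)
    (β := divisionClosure (Algebra.adjoin R (Set.range fun j => (C (y j) : k⟦X⟧))).toSubring)
    (f := fun j => ⟨C (y j), le_divisionClosure _ (Algebra.subset_adjoin ⟨j, rfl⟩)⟩)
    fun i j hij => hinj (congrArg Subtype.val hij)
  simpa using h1

namespace IsDivisionClosed

variable {R : Subring k⟦X⟧}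

theorem unif_pow_dvd_iff (hR : IsDivisionClosed R) {n : ℕ} {r : R} :
    hR.unif ^ n ∣ r ↔ (X : k⟦X⟧) ^ n ∣ r := by
  constructor
  · rintro ⟨c, rfl⟩
    exact ⟨c, rfl⟩
  · rintro ⟨c, hc⟩
    refine ⟨⟨c, hR.mem_of_mul_mem (pow_mem hR.X_mem n) (pow_ne_zero n X_ne_zero) ?_⟩,
      Subtype.ext hc⟩
    rw [← hc]
    exact r.2

theorem isLocalHom_inclusion {S : Subring k⟦X⟧} (hS : IsDivisionClosed S) (h : S ≤ R) :
    IsLocalHom (Subring.inclusion h) where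
  map_nonunit _ hr := hS.isUnit_of_constantCoeff_ne_zero
    (((hr.map R.subtype).map (constantCoeff (R := k))).ne_zero)

end IsDivisionClosed

theorem IsGoodSubring.notPAdicComplete {μ : Cardinal.{0}} {b : k⟦X⟧} {R : Subring k⟦X⟧}
    (hR : IsGoodSubring μ b R) : NotPAdicComplete R hR.isDivisionClosed.unif := by
  choose c hc hbc using hR.exists_dvd_sub
  refine ⟨fun n => ⟨c n, hc n⟩, fun n => ⟨n, fun i hi j hj => ?_⟩, fun L hL => ?_⟩
  · rw [hR.isDivisionClosed.unif_pow_dvd_iff]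
    have := dvd_sub ((pow_dvd_pow X hj).trans (hbc j)) ((pow_dvd_pow X hi).trans (hbc i))
    simpa using this
  · have : b - L = 0 := eq_zero_of_forall_X_pow_dvd fun n => by
      obtain ⟨N, hN⟩ := hL n
      have h1 := hN (max N n) (le_max_left _ _)
      rw [hR.isDivisionClosed.unif_pow_dvd_iff] at h1
      have := dvd_add ((pow_dvd_pow X (le_max_right N n)).trans (hbc (max N n))) h1
      simpa using this
    exact hR.notMem (sub_eq_zero.1 this ▸ L.2)

theorem IsGenerated.exists_surjective {R M I : Type} [CommRing R] [AddCommGroup M] [Module R M]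
    [Infinite I] (h : IsGenerated R M #I) :
    ∃ π : (I →₀ R) →ₗ[R] M, Function.Surjective π := by
  obtain ⟨S, hS, hspan⟩ := h
  have hS' : #(insert 0 S : Set M) ≤ #I :=
    (mk_insert_le).trans (add_le_of_le (aleph0_le_mk I) hS
      (one_le_aleph0.trans (aleph0_le_mk I)))
  obtain ⟨e⟩ := hS'
  obtain ⟨f, hf⟩ : ∃ f : I → (insert 0 S : Set M), Function.Surjective f := by
    have : Nonempty (insert 0 S : Set M) := ⟨⟨0, Set.mem_insert _ _⟩⟩
    exact ⟨Function.invFun e, Function.invFun_surjective e.injective⟩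
  refine ⟨Finsupp.linearCombination R fun i => (f i : M), ?_⟩
  rw [← LinearMap.range_eq_top, Finsupp.range_linearCombination, eq_top_iff, ← hspan]
  refine Submodule.span_mono fun m hm => ?_
  obtain ⟨i, hi⟩ := hf ⟨m, Set.mem_insert_of_mem _ hm⟩
  exact ⟨i, congrArg Subtype.val hi⟩

/-- The module presented by a system of generators of relations over a subring `S` of `R` is
admissible as soon as the module presented over `R` is `ℵ₁`-free. -/
theorem isAdmissibleSystem_of_isKappaFree {R S : Subring k⟦X⟧} (hR : IsDivisionClosed R)
    (hS : IsDivisionClosed S) (hSR : S ≤ R) {I M : Type} [AddCommGroup M] [Module R M]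
    (hM : IsKappaFree R M (aleph 1)) (π : (I →₀ R) →ₗ[R] M)
    (φ : LinearMap.ker π →ₗ[R] R) (g : I → LinearMap.ker π)
    (hg : Submodule.span R (Set.range fun i => (g i : I →₀ R)) = LinearMap.ker π)
    (g' : I → I →₀ S)
    (hg' : ∀ i, (g' i).mapRange (Subring.inclusion hSR) (map_zero _) = g i)
    (a : I → S) (ha : ∀ i, Subring.inclusion hSR (a i) = φ (g i)) :
    IsAdmissibleSystem hS.unif g' a := by
  have := hR.isDiscreteValuationRing
  have := hS.isDiscreteValuationRing
  let : Algebra S R := (Subring.inclusion hSR).toAlgebra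
  have : IsLocalHom (algebraMap S R) := hS.isLocalHom_inclusion hSR
  have : FaithfulSMul S R :=
    (faithfulSMul_iff_algebraMap_injective S R).2 (Subring.inclusion_injective hSR)
  have : Module.IsTorsionFree S R := inferInstance
  have : Module.Flat S R := inferInstance
  have : Module.FaithfullyFlat S R := Module.FaithfullyFlat.of_flat_of_isLocalHom
  have hunif : algebraMap S R hS.unif = hR.unif := rfl
  have htf := hM.isTorsionFree
  have hker : LinearMap.ker π = Submodule.span R
      (Set.range fun i => (g' i).mapRange (algebraMap S R) (map_zero _)) := by
    rw [← hg]
    congr 2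
    funext i
    exact (hg' i).symm
  have hsmul : ∀ m : M, algebraMap S R hS.unif • m = 0 → m = 0 := fun m hm =>
    (smul_eq_zero.1 hm).resolve_left hR.irreducible_unif.ne_zero
  refine ⟨fun m => ?_, ?_, ?_⟩
  · obtain ⟨f, rfl⟩ := Submodule.mkQ_surjective _ m
    rw [← map_smul, Submodule.mkQ_apply, Submodule.mkQ_apply, Submodule.Quotient.mk_eq_zero,
      Submodule.Quotient.mk_eq_zero]
    exact mem_span_of_smul_mem_span π g' hker hsmul f
  · exact HasFinitePureHulls.descend π g' hker
      (hM.hasFinitePureHulls hR.irreducible_unif.ne_zero)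
  · have : Module.IsTorsionFree R ((I →₀ R) ⧸ LinearMap.ker π) :=
      isTorsionFree_quotient hR.irreducible_unif fun f hf => by
        rw [LinearMap.mem_ker, map_smul] at hf
        exact hsmul _ hf
    let j : R →ₗ[R] k⟦X⟧ := Algebra.linearMap R k⟦X⟧
    obtain ⟨ψ, hψ⟩ := exists_extend_to_powerSeries hR (LinearMap.ker π) (j ∘ₗ φ)
    refine ⟨{ toFun := fun f => ψ (f.mapRange (Subring.inclusion hSR) (map_zero _)),
              map_add' := fun f f' => ?_, map_smul' := fun r f => ?_ }, fun i => ?_⟩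
    · rw [← map_add]
      congr 1
      exact Finsupp.mapRange_add (map_add _) f f'
    · have : (r • f).mapRange (Subring.inclusion hSR) (map_zero _) =
          Subring.inclusion hSR r • f.mapRange (Subring.inclusion hSR) (map_zero _) := by
        ext i
        simp
      rw [this, map_smul]
      rfl
    · change ψ ((g' i).mapRange (Subring.inclusion hSR) (map_zero _)) = _
      rw [hg' i, hψ]
      exact congrArg Subtype.val (ha i).symm

theorem isWhitehead_of_saturated {R : Subring k⟦X⟧} (hR : IsDivisionClosed R) {I : Type}
    [Infinite I]
    (hsat : ∀ (J : Type), #J ≤ #I → ∀ v : J → R, ∃ (S : Subring k⟦X⟧) (hS : IsDivisionClosed S),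
      S ≤ R ∧ (∀ j, (v j : k⟦X⟧) ∈ S) ∧ ∀ (g : I → I →₀ S) (a : I → S),
        IsAdmissibleSystem hS.unif g a → ∃ x : I → k⟦X⟧, (∀ i, x i ∈ R) ∧
          ∀ i, Finsupp.linearCombination S x (g i) = a i)
    {M : Type} [AddCommGroup M] [Module R M] (hM : IsKappaFree R M (aleph 1))
    (hgen : IsGenerated R M #I) : IsWhitehead R M := by
  have := hR.isDiscreteValuationRing
  obtain ⟨π, hπ⟩ := hgen.exists_surjective
  refine isWhitehead_of_exists_extend π hπ fun φ => ?_
  obtain ⟨g₀, hg₀⟩ := exists_generators_of_submodule_finsupp (LinearMap.ker π)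
  have hmem : ∀ i, g₀ i ∈ LinearMap.ker π := fun i => hg₀ ▸ Submodule.subset_span ⟨i, rfl⟩
  let g : I → LinearMap.ker π := fun i => ⟨g₀ i, hmem i⟩
  have hJ : #((I × I) ⊕ I) ≤ #I := by simp
  obtain ⟨S, hS, hSR, hv, hsolve⟩ := hsat ((I × I) ⊕ I) hJ
    (Sum.elim (fun q => g₀ q.1 q.2) fun i => φ (g i))
  let g' : I → I →₀ S := fun i => Finsupp.ofSupportFinite
    (fun l => ⟨g₀ i l, hv (Sum.inl (i, l))⟩)
    ((g₀ i).hasFiniteSupport.subset fun l hl h =>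
      hl (Subtype.ext (congrArg (fun r : R => (r : k⟦X⟧)) h)))
  have hg' : ∀ i, (g' i).mapRange (Subring.inclusion hSR) (map_zero _) = g i := by
    intro i
    ext l
    rfl
  obtain ⟨x, hxR, hx⟩ := hsolve g' (fun i => ⟨φ (g i), hv (Sum.inr i)⟩)
    (isAdmissibleSystem_of_isKappaFree hR hS hSR hM π φ g hg₀ g' hg' _ fun i => rfl)
  let ψ : (I →₀ R) →ₗ[R] R := Finsupp.linearCombination R fun i => ⟨x i, hxR i⟩
  have hψ : ∀ i, ψ (g₀ i) = φ (g i) := by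
    intro i
    refine Subtype.ext ((?_ : _ = _).trans (hx i))
    have : g₀ i = (g' i).mapRange (Subring.inclusion hSR) (map_zero _) := (hg' i).symm
    rw [this]
    simp only [ψ, Finsupp.linearCombination_apply]
    rw [Finsupp.sum_mapRange_index (by simp)]
    simp only [Finsupp.sum, AddSubmonoidClass.coe_finsetSum]
    rfl
  refine ⟨ψ, fun f => ?_⟩
  obtain ⟨f, hf⟩ := f
  change ψ f = φ ⟨f, hf⟩
  have hf' := hf
  rw [← hg₀] at hf'
  induction hf' using Submodule.span_induction with
  | mem f hfr =>
    obtain ⟨i, rfl⟩ := hfr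
    exact hψ i
  | zero => exact (map_zero ψ).trans (map_zero φ).symm
  | add f f' h h' ih ih' =>
    rw [hg₀] at h h'
    rw [map_add, ih h, ih' h', ← map_add]
    rfl
  | smul r f h ih =>
    rw [hg₀] at h
    rw [map_smul, ih h, ← map_smul]
    rfl

end Construction

/-- Eklof–Shelah, Theorem 4: for every cardinal `κ ≥ ℵ₁` there is a local
slender p.i.d. `R` of cardinality `2 ^ κ` such that every `ℵ₁`-free `κ`-generated
`R`-module is a Whitehead module. -/
theorem exists_pid_kappa_generated_aleph_one_free_implies_whitehead :
    ∀ κ : Cardinal.{0}, aleph 1 ≤ κ →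
    ∃ (R : Type) (_ : CommRing R) (p : R),
      IsDomain R ∧ IsPrincipalIdealRing R ∧ ¬ IsField R ∧
      ∃ _ : IsLocalRing R, Prime p ∧ IsLocalRing.maximalIdeal R = Ideal.span {p} ∧
      NotPAdicComplete R p ∧
      #R = 2 ^ κ ∧
      ∀ (M : Type) (_ : AddCommGroup M) (_ : Module R M),
        IsKappaFree R M (aleph 1) → IsGenerated R M κ → IsWhitehead R M := by
  intro κ hκ
  have hκ₀ : ℵ₀ ≤ κ := (aleph0_le_aleph 1).trans hκ
  obtain ⟨I, rfl⟩ := Quotient.exists_rep κ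
  change ℵ₀ ≤ #I at hκ₀
  have : Infinite I := infinite_iff.2 hκ₀
  obtain ⟨hfield⟩ := Infinite.nonempty_field (α := Set (Set I))
  have hk : (2 : Cardinal.{0}) ^ #I < #(Set (Set I)) := by
    rw [mk_set, mk_set]
    exact cantor _
  obtain ⟨b, R₀, hR₀, hcard₀⟩ := exists_isGoodSubring_mk_eq (hκ₀.trans (cantor _).le) hk
  obtain ⟨R, hR, hle, hsat⟩ := IsGoodSubring.exists_saturated hκ₀ hk rfl hR₀
  have hdvr := hR.isDivisionClosed.isDiscreteValuationRing
  refine ⟨R, inferInstance, hR.isDivisionClosed.unif, inferInstance, inferInstance,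
    IsDiscreteValuationRing.not_isField R, inferInstance,
    hR.isDivisionClosed.irreducible_unif.prime,
    hR.isDivisionClosed.irreducible_unif.maximalIdeal_eq, hR.notPAdicComplete,
    hR.mk_le.antisymm ?_, fun M _ _ hM hgen => ?_⟩
  · exact hcard₀.symm.le.trans (mk_le_of_injective (Subring.inclusion_injective hle))
  · refine isWhitehead_of_saturated hR.isDivisionClosed (fun J hJ v => ?_) hM hgen
    obtain ⟨S, hS, h⟩ := hsat J hJ v
    exact ⟨S, hS.isDivisionClosed, h⟩
end

section
/- For every cardinal κ ≥ ℵ₁ there exists a commutative ring R such that: R is a local principal ideal domain (and not a field); R has cardinality κ; and every R-module M of cardinality ≤ κ which is a Whitehead module (Ext¹_R(M, R) = 0) is a free R-module. -/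
/-!
Statement 0 (Eklof–Shelah, "Whitehead modules over large principal ideal domains",
Theorem 1): There is a slender (local, not `p`-adically complete) p.i.d. `R` of
cardinality `2 ^ ℵ₁` such that every `ℵ₁`-free `ℵ₁`-generated `R`-module is a
Whitehead module.
-/

open Cardinal

universe u

/-- Submodules of free modules over a principal ideal domain are free, in arbitrary rank. -/
theorem Submodule.free_of_le_finsupp {R : Type*} [CommRing R] [IsDomain R] [IsPrincipalIdealRing R]
    {ι : Type*} (N : Submodule R (ι →₀ R)) : Module.Free R N := by
  classical
  obtain ⟨_, _⟩ := exists_wellFoundedLT ι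
  -- the ideal of leading coefficients at `i`
  let I : ι → Ideal R := fun i =>
    (N ⊓ Finsupp.supported R R (Set.Iic i)).map (Finsupp.lapply i)
  have hgen : ∀ i, ∃ f ∈ N ⊓ Finsupp.supported R R (Set.Iic i),
      f i = Submodule.IsPrincipal.generator (I i) := fun i => by
    obtain ⟨f, hf, h⟩ := Submodule.IsPrincipal.generator_mem (I i)
    exact ⟨f, hf, h⟩
  choose b hbN hb using hgen
  have hbs : ∀ i j, i < j → b i j = 0 := fun i j hij => by
    by_contra h
    exact absurd ((Finsupp.mem_supported R _).1 (hbN i).2 (Finsupp.mem_support_iff.2 h))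
      (by simpa using hij)
  let J := {i // I i ≠ ⊥}
  let v : J → N := fun j => ⟨b j, (hbN j).1⟩
  have hne : ∀ j : J, b j j ≠ 0 := fun j h => j.2 <| by
    rw [hb] at h
    exact (Submodule.IsPrincipal.eq_bot_iff_generator_eq_zero _).2 h
  have hli' : LinearIndependent R fun j : J => b j := by
    refine linearIndependent_iff.2 fun l hl => ?_
    by_contra h0
    have hs : l.support.Nonempty := Finsupp.support_nonempty_iff.2 h0
    set m := l.support.max' hs with hm
    have hmem : m ∈ l.support := Finset.max'_mem _ _
    have h1 : (Finsupp.linearCombination R (fun j : J => b j) l) m = 0 := by rw [hl]; rfl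
    rw [Finsupp.linearCombination_apply, Finsupp.sum, Finsupp.finsetSum_apply,
      Finset.sum_eq_single_of_mem m hmem] at h1
    · simp only [Finsupp.smul_apply, smul_eq_mul, mul_eq_zero] at h1
      exact h1.elim (Finsupp.mem_support_iff.1 hmem) (hne m)
    · intro j hj hjm
      have : j < m := lt_of_le_of_ne (Finset.le_max' _ _ hj) hjm
      simp [hbs j m this]
  have hli : LinearIndependent R v := LinearIndependent.of_comp N.subtype hli'
  have hspan : ∀ i : ι, ∀ f : N, (f : ι →₀ R) ∈ Finsupp.supported R R (Set.Iic i) →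
      f ∈ Submodule.span R (Set.range v) := by
    intro i
    induction i using WellFoundedLT.induction with
    | ind i ih =>
    intro f hf
    have hfI : (f : ι →₀ R) i ∈ I i := ⟨f, ⟨f.2, hf⟩, rfl⟩
    obtain ⟨c, hc⟩ := (Submodule.IsPrincipal.mem_iff_eq_smul_generator _).1 hfI
    have hcb : c • (⟨b i, (hbN i).1⟩ : N) ∈ Submodule.span R (Set.range v) := by
      by_cases hi : I i = ⊥
      · have hbi : b i i = 0 := by
          rw [hb, (Submodule.IsPrincipal.eq_bot_iff_generator_eq_zero _).1 hi]
        rcases eq_or_ne (b i) 0 with h0 | h0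
        · have : (⟨b i, (hbN i).1⟩ : N) = 0 := Subtype.ext h0
          rw [this]; simp
        · refine Submodule.smul_mem _ _ ?_
          have hs := Finsupp.support_nonempty_iff.2 h0
          have hmem := Finset.max'_mem _ hs
          have hle : (b i).support.max' hs ≤ i := (Finsupp.mem_supported R _).1 (hbN i).2 hmem
          refine ih _ (lt_of_le_of_ne hle ?_) _ ?_
          · intro h; rw [h] at hmem; exact (Finsupp.mem_support_iff.1 hmem) hbi
          · exact (Finsupp.mem_supported R _).2 fun x hx => Finset.le_max' _ _ hx
      · exact Submodule.smul_mem _ _ (Submodule.subset_span ⟨⟨i, hi⟩, rfl⟩)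
    set g : N := f - c • (⟨b i, (hbN i).1⟩ : N) with hg
    have hgi : (g : ι →₀ R) i = 0 := by
      simp only [hg, Submodule.coe_sub, Submodule.coe_smul, Finsupp.sub_apply, Finsupp.smul_apply,
        hb]
      rw [hc, sub_self]
    have hgs : (g : ι →₀ R) ∈ Finsupp.supported R R (Set.Iic i) :=
      Submodule.sub_mem _ hf (Submodule.smul_mem _ _ (hbN i).2)
    have hgm : g ∈ Submodule.span R (Set.range v) := by
      rcases eq_or_ne (g : ι →₀ R) 0 with h0 | h0
      · have : g = 0 := Subtype.ext h0
        rw [this]; exact zero_mem _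
      · have hs := Finsupp.support_nonempty_iff.2 h0
        have hmem := Finset.max'_mem _ hs
        have hle : (g : ι →₀ R).support.max' hs ≤ i := (Finsupp.mem_supported R _).1 hgs hmem
        refine ih _ (lt_of_le_of_ne hle ?_) _ ?_
        · intro h; rw [h] at hmem; exact (Finsupp.mem_support_iff.1 hmem) hgi
        · exact (Finsupp.mem_supported R _).2 fun x hx => Finset.le_max' _ _ hx
    have : f = g + c • (⟨b i, (hbN i).1⟩ : N) := by rw [hg]; abel
    rw [this]
    exact add_mem hgm hcb
  refine Module.Free.of_basis (Module.Basis.mk hli ?_)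
  intro f _
  rcases eq_or_ne (f : ι →₀ R) 0 with h0 | h0
  · have : f = 0 := Subtype.ext h0
    rw [this]; exact zero_mem _
  · exact hspan _ f ((Finsupp.mem_supported R _).2 fun x hx =>
      Finset.le_max' _ _ hx : _ ∈ Finsupp.supported R R (Set.Iic
        ((f : ι →₀ R).support.max' (Finsupp.support_nonempty_iff.2 h0))))

/-- A derivation on `A` into a module over a localization extends to the localization. -/
theorem IsLocalization.exists_derivation_extension {A R N : Type*} [CommRing A] [CommRing R]
    [Algebra A R] (S : Submonoid A) [IsLocalization S R] [AddCommGroup N] [Module R N]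
    (D : A →+ N) (hD : ∀ a b, D (a * b) = algebraMap A R a • D b + algebraMap A R b • D a) :
    ∃ d : R →+ N, (∀ a b, d (a * b) = a • d b + b • d a) ∧ ∀ a, d (algebraMap A R a) = D a := by
  have hD1 : D 1 = 0 := by simpa using hD 1 1
  let : Module Rᵐᵒᵖ N := Module.compHom N ((RingHom.id R).fromOpposite fun _ _ => mul_comm _ _)
  have : IsCentralScalar R N := ⟨fun _ _ => rfl⟩
  let f : A →+* TrivSqZeroExt R N :=
    { toFun := fun a => TrivSqZeroExt.inl (algebraMap A R a) + TrivSqZeroExt.inr (D a)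
      map_one' := TrivSqZeroExt.ext (by simp) (by simp [hD1])
      map_zero' := TrivSqZeroExt.ext (by simp) (by simp)
      map_add' := fun a b => TrivSqZeroExt.ext (by simp) (by simp)
      map_mul' := fun a b => TrivSqZeroExt.ext (by simp) (by simp [hD]) }
  have hf : ∀ y : S, IsUnit (f y) := fun y => by
    rw [TrivSqZeroExt.isUnit_iff_isUnit_fst]
    simpa [f] using IsLocalization.map_units R y
  let g : R →+* TrivSqZeroExt R N := IsLocalization.lift hf
  have hg : ∀ a, g (algebraMap A R a) = f a := fun a => IsLocalization.lift_eq hf a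
  have hfst : ∀ r, (g r).fst = r := by
    have : ((TrivSqZeroExt.fstHom ℤ R N : TrivSqZeroExt R N →+* R)).comp g = RingHom.id R := by
      refine IsLocalization.ringHom_ext S (RingHom.ext fun a => ?_)
      simp [hg, f]
    exact fun r => RingHom.congr_fun this r
  refine ⟨⟨⟨fun r => (g r).snd, by simp⟩, fun a b => by simp⟩, fun a b => ?_, fun a => ?_⟩
  · change (g (a * b)).snd = a • (g b).snd + b • (g a).snd
    simp [hfst]
  · simp [hg, f]

/-- A domain with well-founded divisibility and a prime element `t` can be localized at `t` to obtain a discrete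
valuation ring, and derivations extend to it. -/
theorem exists_dvr_derivation_of_prime {A V : Type} [CommRing A] [IsDomain A] [WfDvdMonoid A]
    {t : A} (ht : Prime t) (x : V → A) (D : A →+ (V →₀ A))
    (hD : ∀ a b, D (a * b) = a • D b + b • D a) (hx : ∀ v, D (x v) = Finsupp.single v 1) :
    ∃ (R : Type) (_ : CommRing R) (_ : IsDomain R) (_ : IsDiscreteValuationRing R)
      (x : V → R) (d : R →+ (V →₀ R)), #R = #A ∧ (∀ a b, d (a * b) = a • d b + b • d a) ∧
        ∀ v, d (x v) = Finsupp.single v 1 := by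
  let P : Ideal A := Ideal.span {t}
  have hP : P.IsPrime := (Ideal.span_singleton_prime ht.ne_zero).2 ht
  let R := Localization.AtPrime P
  have hinj : Function.Injective (algebraMap A R) :=
    IsLocalization.injective R P.primeCompl_le_nonZeroDivisors
  have hdom : IsDomain R := IsLocalization.isDomain_localization P.primeCompl_le_nonZeroDivisors
  have hunit : ∀ a : A, IsUnit (algebraMap A R a) ↔ ¬ t ∣ a := fun a => by
    rw [IsLocalization.AtPrime.isUnit_to_map_iff R P, Ideal.mem_primeCompl_iff,
      Ideal.mem_span_singleton]
  have h_irr : Irreducible (algebraMap A R t) := by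
    refine Prime.irreducible ?_
    refine (Ideal.span_singleton_prime ((map_ne_zero_iff _ hinj).2 ht.ne_zero)).1 ?_
    have := IsLocalization.isPrime_of_isPrime_disjoint P.primeCompl R P hP
      (Set.disjoint_left.2 fun x hx hx' => hx hx')
    rwa [Ideal.map_span, Set.image_singleton] at this
  have hdvr : IsDiscreteValuationRing R := by
    refine IsDiscreteValuationRing.ofHasUnitMulPowIrreducibleFactorization
      ⟨algebraMap A R t, h_irr, fun {x} hx => ?_⟩
    obtain ⟨⟨a, s⟩, hs⟩ := IsLocalization.surj P.primeCompl x
    have ha : a ≠ 0 := by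
      rintro rfl
      simp only [map_zero, mul_eq_zero] at hs
      exact hs.elim hx (IsLocalization.map_units R s).ne_zero
    obtain ⟨n, b, hb, rfl⟩ := WfDvdMonoid.max_power_factor ha ht.irreducible
    refine ⟨n, ?_⟩
    have h1 : Associated (algebraMap A R t ^ n) (algebraMap A R (t ^ n * b)) := by
      rw [map_mul, map_pow]
      exact associated_mul_unit_right _ _ ((hunit b).2 hb)
    refine h1.trans ?_
    rw [← hs]
    exact associated_mul_unit_left _ _ (IsLocalization.map_units R s)
  let q : (V →₀ A) →ₗ[A] (V →₀ R) := Finsupp.mapRange.linearMap (Algebra.linearMap A R)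
  obtain ⟨d, hd, hdA⟩ := IsLocalization.exists_derivation_extension (R := R) P.primeCompl
    (q.toAddMonoidHom.comp D) (fun a b => by simp [hD])
  refine ⟨R, inferInstance, hdom, hdvr, fun v => algebraMap A R (x v), d,
    IsLocalization.cardinalMk R P.primeCompl P.primeCompl_le_nonZeroDivisors, hd, fun v => ?_⟩
  rw [hdA]
  simp [hx, q]

/-- For every infinite type `V` there is a discrete valuation ring of the same cardinality with
elements `x v` and derivations `∂ / ∂ (x v)`. -/
theorem exists_dvr_derivation (V : Type) [Infinite V] :
    ∃ (R : Type) (_ : CommRing R) (_ : IsDomain R) (_ : IsDiscreteValuationRing R)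
      (x : V → R) (d : R →+ (V →₀ R)), #R = #V ∧ (∀ a b, d (a * b) = a • d b + b • d a) ∧
        ∀ v, d (x v) = Finsupp.single v 1 := by
  let D : Derivation ℤ (MvPolynomial (Option V) ℤ) (V →₀ MvPolynomial (Option V) ℤ) :=
    MvPolynomial.mkDerivation ℤ fun o => o.elim 0 fun v => Finsupp.single v 1
  obtain ⟨R, _, _, _, x, d, hR, h⟩ := exists_dvr_derivation_of_prime
    (MvPolynomial.X_prime (R := ℤ) (i := (none : Option V))) (fun v => MvPolynomial.X (some v))
    (D : MvPolynomial (Option V) ℤ →+ (V →₀ MvPolynomial (Option V) ℤ)) (fun a b => by simp)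
    (fun v => by simp [D])
  refine ⟨R, _, _, ‹_›, x, d, ?_, h⟩
  rw [hR]
  simp

open CategoryTheory in
/-- If `Ext¹(M, R) = 0`, functionals extend from the kernel of a surjection from a projective
module onto `M`. -/
theorem IsWhitehead.exists_extension {R M F : Type u} [CommRing R] [AddCommGroup M] [Module R M]
    [AddCommGroup F] [Module R F] [Module.Projective R F] (hM : IsWhitehead R M)
    (π : F →ₗ[R] M) (hπ : Function.Surjective π) (ψ : LinearMap.ker π →ₗ[R] R) :
    ∃ φ : F →ₗ[R] R, ∀ k : LinearMap.ker π, φ k = ψ k := by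
  let P := ProjectiveResolution.of (ModuleCat.of R M)
  have hcocycle : ∀ f : P.complex.X 1 ⟶ ModuleCat.of R R, P.complex.d 2 1 ≫ f = 0 →
      ∃ g : P.complex.X 0 ⟶ ModuleCat.of R R, f = P.complex.d 1 0 ≫ g := by
    intro f hf
    have hz : Limits.IsZero ((P.complex.linearYonedaObj R (ModuleCat.of R R)).homology 1) := by
      refine Limits.IsZero.of_iso ?_ (P.isoExt 1 (ModuleCat.of R R)).symm
      exact @ModuleCat.isZero_of_subsingleton R _ _ hM
    rw [← HomologicalComplex.exactAt_iff_isZero_homology,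
      HomologicalComplex.exactAt_iff' _ 0 1 2 (by simp) (by simp)] at hz
    rw [ShortComplex.moduleCat_exact_iff] at hz
    obtain ⟨g, hg⟩ := hz f hf
    exact ⟨g, hg.symm⟩
  let ε : P.complex.X 0 ⟶ ModuleCat.of R M := P.π.f 0
  have hε : Function.Surjective ε.hom := by
    have : Epi ε := inferInstanceAs (Epi (P.π.f 0))
    exact (ModuleCat.epi_iff_surjective _).1 this
  have hdε : P.complex.d 1 0 ≫ ε = 0 := P.complex_d_comp_π_f_zero
  have hex : ∀ y : P.complex.X 0, ε.hom y = 0 → ∃ z, (P.complex.d 1 0).hom z = y := by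
    have := P.exact₀
    rw [ShortComplex.moduleCat_exact_iff] at this
    exact this
  have : Module.Projective R (P.complex.X 0) :=
    (IsProjective.iff_projective _).2 (P.projective 0)
  obtain ⟨t, ht⟩ := Module.projective_lifting_property π ε.hom hπ
  obtain ⟨s, hs⟩ := Module.projective_lifting_property ε.hom π hε
  have ht' : ∀ y, π (t y) = ε.hom y := fun y => LinearMap.congr_fun ht y
  have hs' : ∀ y, ε.hom (s y) = π y := fun y => LinearMap.congr_fun hs y
  let t₁ : P.complex.X 1 →ₗ[R] LinearMap.ker π :=
    (t ∘ₗ (P.complex.d 1 0).hom).codRestrict _ fun y => by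
      have := congrArg (fun k => k.hom y) hdε
      simp only [LinearMap.mem_ker, LinearMap.comp_apply, ht']
      simpa using this
  obtain ⟨g, hg⟩ := hcocycle (ModuleCat.ofHom (ψ ∘ₗ t₁)) (by
    ext y
    have h0 : (P.complex.d 1 0).hom ((P.complex.d 2 1).hom y) = 0 :=
      congrArg (fun k => k.hom y) (P.complex.d_comp_d 2 1 0)
    have h1 : t₁ ((P.complex.d 2 1).hom y) = 0 := Subtype.ext (by simp [t₁, h0])
    change ψ (t₁ ((P.complex.d 2 1).hom y)) = 0
    rw [h1, map_zero])
  have hg' : ∀ y, ψ (t₁ y) = g.hom ((P.complex.d 1 0).hom y) := fun y =>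
    congrArg (fun k => k.hom y) hg
  let h : F →ₗ[R] LinearMap.ker π := (t ∘ₗ s - LinearMap.id).codRestrict _ fun y => by
    simp [ht', hs']
  refine ⟨g.hom ∘ₗ s - ψ ∘ₗ h, fun k => ?_⟩
  obtain ⟨z, hz⟩ := hex (s k) (by rw [hs']; exact k.2)
  have h1 : t₁ z - h k = k := Subtype.ext (by simp [t₁, h, hz])
  rw [LinearMap.sub_apply, LinearMap.comp_apply, LinearMap.comp_apply, ← hz, ← hg', ← map_sub, h1]

/-- `A` is closed under the supports of the vectors `e α`, `α ∈ A`. -/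
def SuppClosed {R ι : Type} [CommRing R] (e : ι → ι →₀ R) (A : Set ι) : Prop :=
  ∀ α ∈ A, ∀ β, e α β ≠ 0 → β ∈ A

/-- The vectors `e α`, `α ∈ B \ A`, admit a dual system of functionals which vanish on the
coordinates in `A`. -/
def SplitsOver {R ι : Type} [CommRing R] (e : ι → ι →₀ R) (A B : Set ι) : Prop :=
  ∃ Φ : (ι →₀ R) →ₗ[R] (ι →₀ R), (∀ β ∈ A, Φ (Finsupp.single β 1) = 0) ∧
    ∀ α ∈ B, α ∉ A → Φ (e α) = Finsupp.single α 1

section Splitting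

variable {R ι : Type} [CommRing R] {e : ι → ι →₀ R}

theorem SplitsOver.mono {A B C : Set ι} (h : SplitsOver e A C) (hBC : ∀ β ∈ B, β ∉ A → β ∈ C) :
    SplitsOver e A B := by
  obtain ⟨Φ, h1, h2⟩ := h
  exact ⟨Φ, h1, fun α hα hαA => h2 α (hBC α hα hαA) hαA⟩

theorem Finsupp.linearMap_apply_eq_sum {N : Type} [AddCommGroup N] [Module R N]
    (Φ : (ι →₀ R) →ₗ[R] N) (f : ι →₀ R) :
    Φ f = ∑ β ∈ f.support, f β • Φ (Finsupp.single β 1) := by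
  conv_lhs => rw [← Finsupp.sum_single f, Finsupp.sum, map_sum]
  exact Finset.sum_congr rfl fun β _ => by rw [← map_smul, Finsupp.smul_single_one]

/-- Differentiating a functional with generic values at the `e α` yields a splitting. -/
theorem SplitsOver.of_generic {x : ι × ι → R} {d : R →+ (ι × ι →₀ R)}
    (hd : ∀ a b, d (a * b) = a • d b + b • d a) (hx : ∀ v, d (x v) = Finsupp.single v 1)
    {A B : Set ι} (i : ι → ι) (φ : (ι →₀ R) →ₗ[R] R)
    (hφ : ∀ α ∈ B, α ∉ A → φ (e α) = x (α, i α))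
    (he : ∀ α ∈ B, α ∉ A → ∀ γ ∈ B, γ ∉ A → ∀ β, d (e α β) (γ, i γ) = 0)
    (hA : ∀ β ∈ A, ∀ γ ∈ B, γ ∉ A → d (φ (Finsupp.single β 1)) (γ, i γ) = 0) :
    SplitsOver e A B := by
  classical
  have hinj : Function.Injective fun γ : ι => (γ, i γ) := fun _ _ h => congrArg Prod.fst h
  let P : (ι × ι →₀ R) → (ι →₀ R) := fun v =>
    (Finsupp.comapDomain (fun γ : ι => (γ, i γ)) v hinj.injOn).filter (· ∈ B \ A)
  let Φ : (ι →₀ R) →ₗ[R] (ι →₀ R) := Finsupp.linearCombination R fun β =>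
    if β ∈ A then 0 else P (d (φ (Finsupp.single β 1)))
  have hΦ : ∀ β, Φ (Finsupp.single β 1) = if β ∈ A then 0 else P (d (φ (Finsupp.single β 1))) :=
    fun β => by simp [Φ]
  refine ⟨Φ, fun β hβ => by rw [hΦ, if_pos hβ], fun α hα hαA => ?_⟩
  ext γ
  rw [Finsupp.linearMap_apply_eq_sum, Finsupp.finsetSum_apply]
  by_cases hγ : γ ∈ B ∧ γ ∉ A
  · have h1 : d (φ (e α)) (γ, i γ) = Finsupp.single α 1 γ := by
      rw [hφ α hα hαA, hx]
      by_cases h : α = γ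
      · subst h; simp
      · rw [Finsupp.single_eq_of_ne' h, Finsupp.single_eq_of_ne']
        exact fun h' => h (congrArg Prod.fst h')
    rw [← h1, Finsupp.linearMap_apply_eq_sum φ, map_sum, Finsupp.finsetSum_apply]
    refine Finset.sum_congr rfl fun β _ => ?_
    rw [smul_eq_mul, hd, hΦ]
    split_ifs with h
    · simp [hA β h γ hγ.1 hγ.2, he α hα hαA γ hγ.1 hγ.2 β]
    · simp [P, hγ, he α hα hαA γ hγ.1 hγ.2 β]
  · rw [Finsupp.single_eq_of_ne']
    · refine Finset.sum_eq_zero fun β _ => ?_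
      rw [hΦ]
      split_ifs with h
      · simp
      · simp [P, hγ]
    · rintro rfl
      exact hγ ⟨hα, hαA⟩

/-- A splitting of `B` extends to a splitting of `C` when `C` splits over `B`. -/
theorem SplitsOver.concat {B C : Set ι} (h : SplitsOver e B C) (hB : SuppClosed e B)
    {Φ₁ : (ι →₀ R) →ₗ[R] (ι →₀ R)} (hΦ₁ : ∀ α ∈ B, Φ₁ (e α) = Finsupp.single α 1) :
    ∃ Φ : (ι →₀ R) →ₗ[R] (ι →₀ R),
      (∀ β ∈ B, Φ (Finsupp.single β 1) = Φ₁ (Finsupp.single β 1)) ∧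
      ∀ α ∈ C, Φ (e α) = Finsupp.single α 1 := by
  classical
  obtain ⟨Φ₂, h1, h2⟩ := h
  let Ψ : (ι →₀ R) →ₗ[R] (ι →₀ R) := Finsupp.linearCombination R fun β =>
    if β ∈ B then Φ₁ (Finsupp.single β 1) else 0
  let Θ : (ι →₀ R) →ₗ[R] (ι →₀ R) := Finsupp.linearCombination R fun α =>
    Finsupp.single α 1 - Ψ (e α)
  have hΨ : ∀ β ∈ B, Ψ (Finsupp.single β 1) = Φ₁ (Finsupp.single β 1) := fun β hβ => by
    simp [Ψ, hβ]
  refine ⟨Ψ + Θ ∘ₗ Φ₂, fun β hβ => by simp [hΨ β hβ, h1 β hβ], fun α hα => ?_⟩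
  by_cases hαB : α ∈ B
  · have hz : Φ₂ (e α) = 0 := by
      rw [Finsupp.linearMap_apply_eq_sum]
      exact Finset.sum_eq_zero fun β hβ => by
        rw [h1 β (hB α hαB β (Finsupp.mem_support_iff.1 hβ)), smul_zero]
    have hs : Ψ (e α) = Φ₁ (e α) := by
      rw [Finsupp.linearMap_apply_eq_sum, Finsupp.linearMap_apply_eq_sum Φ₁]
      exact Finset.sum_congr rfl fun β hβ => by
        rw [hΨ β (hB α hαB β (Finsupp.mem_support_iff.1 hβ))]
    simp [hz, hs, hΦ₁ α hαB]
  · simp [h2 α hα hαB, Θ]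

/-- A splitting of `B` induces one over any `A` which it preserves. -/
theorem SplitsOver.of_restrict {A B : Set ι} (hB : SuppClosed e B)
    {Φ : (ι →₀ R) →ₗ[R] (ι →₀ R)} (hΦ : ∀ α ∈ B, Φ (e α) = Finsupp.single α 1)
    (hA : ∀ β ∈ A, β ∈ B → ∀ γ, Φ (Finsupp.single β 1) γ ≠ 0 → γ ∈ A) :
    SplitsOver e A B := by
  classical
  let Ψ : (ι →₀ R) →ₗ[R] (ι →₀ R) := Finsupp.linearCombination R fun β =>
    if β ∈ A then 0 else (Φ (Finsupp.single β 1)).filter (· ∉ A)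
  have hΨ : ∀ β, Ψ (Finsupp.single β 1) =
      if β ∈ A then 0 else (Φ (Finsupp.single β 1)).filter (· ∉ A) := fun β => by simp [Ψ]
  refine ⟨Ψ, fun β hβ => by rw [hΨ, if_pos hβ], fun α hα hαA => ?_⟩
  ext γ
  rw [Finsupp.linearMap_apply_eq_sum, Finsupp.finsetSum_apply]
  by_cases hγ : γ ∈ A
  · rw [Finsupp.single_eq_of_ne' (by rintro rfl; exact hαA hγ)]
    refine Finset.sum_eq_zero fun β _ => ?_
    rw [hΨ]
    split_ifs <;> simp [hγ]
  · rw [← hΦ α hα, Finsupp.linearMap_apply_eq_sum Φ, Finsupp.finsetSum_apply]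
    refine Finset.sum_congr rfl fun β hβ => ?_
    rw [hΨ]
    split_ifs with h
    · have := mt (hA β h (hB α hα β (Finsupp.mem_support_iff.1 hβ)) γ) hγ
      rw [not_not] at this
      simp [this]
    · simp [hγ]

/-- Splittings of the successive steps of a filtration combine to a splitting. -/
theorem SplitsOver.of_filtration {W : Type} [LinearOrder W] [WellFoundedLT W] (ρ : ι → W)
    (hρ : ∀ α β, e α β ≠ 0 → ρ β ≤ ρ α)
    (h : ∀ α, SplitsOver e {β | ρ β < ρ α} {β | ρ β ≤ ρ α}) : SplitsOver e ∅ Set.univ := by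
  classical
  have h' : ∀ w, SplitsOver e {β | ρ β < w} {β | ρ β ≤ w} := fun w => by
    by_cases hw : ∃ α, ρ α = w
    · obtain ⟨α, rfl⟩ := hw
      exact h α
    · exact ⟨0, fun _ _ => rfl, fun α hα hα' => (hw ⟨α, le_antisymm hα (not_lt.1 hα')⟩).elim⟩
  choose Φ hΦ₀ hΦ using h'
  let P : (ι →₀ R) →ₗ[R] (ι →₀ R) := Finsupp.linearCombination R fun β =>
    (Φ (ρ β) (Finsupp.single β 1)).filter (ρ · = ρ β)
  have hP : ∀ β, P (Finsupp.single β 1) = (Φ (ρ β) (Finsupp.single β 1)).filter (ρ · = ρ β) :=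
    fun β => by simp [P]
  clear_value P
  have hPe : ∀ α γ, ρ α ≤ ρ γ → P (e α) γ = Finsupp.single α 1 γ := by
    intro α γ hle
    rcases hle.lt_or_eq with hlt | heq
    · rw [Finsupp.single_eq_of_ne' (by rintro rfl; exact lt_irrefl _ hlt),
        Finsupp.linearMap_apply_eq_sum, Finsupp.finsetSum_apply]
      refine Finset.sum_eq_zero fun β hβ => ?_
      have : ρ γ ≠ ρ β := fun h =>
        absurd (hρ α β (Finsupp.mem_support_iff.1 hβ)) (by rw [← h]; exact not_le.2 hlt)
      simp [hP, this]
    · rw [← hΦ (ρ α) α le_rfl (lt_irrefl _), Finsupp.linearMap_apply_eq_sum,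
        Finsupp.linearMap_apply_eq_sum (Φ (ρ α)), Finsupp.finsetSum_apply, Finsupp.finsetSum_apply]
      refine Finset.sum_congr rfl fun β hβ => ?_
      rcases (hρ α β (Finsupp.mem_support_iff.1 hβ)).lt_or_eq with hβα | hβα
      · simp [hP, hΦ₀ (ρ α) β hβα, ← heq, hβα.ne']
      · simp [hP, ← heq, hβα]
  obtain ⟨q, hq⟩ : ∃ q : ι → (ι →₀ R), ∀ α, q α = Finsupp.single α 1 -
      (P (e α) - Finsupp.single α 1).sum fun γ r => r • if ρ γ < ρ α then q γ else 0 := by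
    have hwf : WellFounded (InvImage (· < ·) ρ) := InvImage.wf ρ wellFounded_lt
    refine ⟨hwf.fix fun α F => Finsupp.single α 1 -
      (P (e α) - Finsupp.single α 1).sum fun γ r => r • if h : ρ γ < ρ α then F γ h else 0,
      fun α => ?_⟩
    rw [hwf.fix_eq]
    simp only [dite_eq_ite]
  refine ⟨Finsupp.linearCombination R q ∘ₗ P, by simp, fun α _ _ => ?_⟩
  have h1 : P (e α) = Finsupp.single α 1 + (P (e α) - Finsupp.single α 1) := by abel
  have h2 : (P (e α) - Finsupp.single α 1).sum (fun γ r => r • if ρ γ < ρ α then q γ else 0) =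
      Finsupp.linearCombination R q (P (e α) - Finsupp.single α 1) := by
    rw [Finsupp.linearCombination_apply]
    refine Finsupp.sum_congr fun γ hγ => ?_
    rw [if_pos]
    by_contra hlt
    exact Finsupp.mem_support_iff.1 hγ (by simp [hPe α γ (not_lt.1 hlt)])
  rw [LinearMap.comp_apply, h1, map_add, ← h2, Finsupp.linearCombination_single, one_smul]
  nth_rewrite 1 [hq α]
  abel

theorem SplitsOver.free {M : Type} [AddCommGroup M] [Module R M] 
    (hfree : ∀ N : Submodule R (ι →₀ R), Module.Free R N)
    {π : (ι →₀ R) →ₗ[R] M} (hπ : Function.Surjective π)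
    (he : Submodule.span R (Set.range e) = LinearMap.ker π) (h : SplitsOver e ∅ Set.univ) :
    Module.Free R M := by
  obtain ⟨Φ, -, hΦ⟩ := h
  let θ : (ι →₀ R) →ₗ[R] (ι →₀ R) := Finsupp.linearCombination R e ∘ₗ Φ
  have hker : LinearMap.ker π = LinearMap.ker (LinearMap.id - θ) := by
    rw [← he]
    apply le_antisymm
    · rw [Submodule.span_le]
      rintro _ ⟨α, rfl⟩
      simp [θ, hΦ α]
    · intro f hf
      have : f = θ f := sub_eq_zero.1 hf
      rw [this, ← Finsupp.range_linearCombination]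
      exact ⟨_, rfl⟩
  have := hfree (LinearMap.range (LinearMap.id - θ))
  exact Module.Free.of_equiv ((LinearMap.quotKerEquivRange (LinearMap.id - θ)).symm ≪≫ₗ
    (Submodule.quotEquivOfEq _ _ hker).symm ≪≫ₗ LinearMap.quotKerEquivOfSurjective π hπ)

end Splitting

/-- A generic derivation on `R`, together with the possibility of prescribing the values of a
functional at the vectors `e α`. -/
structure GenericSystem {R ι : Type} [CommRing R] (e : ι → ι →₀ R) where
  x : ι × ι → R
  d : R →+ (ι × ι →₀ R)
  d_mul : ∀ a b, d (a * b) = a • d b + b • d a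
  d_x : ∀ v, d (x v) = Finsupp.single v 1
  exists_functional : ∀ ψ : ι → R, ∃ φ : (ι →₀ R) →ₗ[R] R, ∀ α, φ (e α) = ψ α

/-- Every small support-closed extension of `A` splits over `A`. -/
def IsGood {R ι : Type} [CommRing R] (e : ι → ι →₀ R) (c : Cardinal.{0}) (A : Set ι) : Prop :=
  ∀ B, SuppClosed e B → A ⊆ B → #B < c → SplitsOver e A B

theorem Cardinal.mk_biUnion_finset_le {α β : Type} (B : Set α) (u : α → Finset β) :
    #(⋃ a ∈ B, (u a : Set β)) ≤ max #B ℵ₀ := by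
  refine (mk_biUnion_le _ _).trans ?_
  refine (mul_le_mul_right (ciSup_le' fun a => ?_) _).trans (mul_le_max_of_aleph0_le_right le_rfl)
  exact (mk_le_aleph0_iff.2 (u a).countable_toSet.to_subtype)

theorem exists_closure_finset {ι : Type} (u : ι → Finset ι) (X : Set ι) :
    ∃ B, X ⊆ B ∧ (∀ α ∈ B, ∀ β ∈ u α, β ∈ B) ∧ #B ≤ max #X ℵ₀ := by
  obtain ⟨B, hB₀, hB⟩ : ∃ B : ℕ → Set ι, B 0 = X ∧
      ∀ n, B (n + 1) = B n ∪ ⋃ a ∈ B n, (u a : Set ι) :=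
    ⟨fun n => Nat.rec X (fun _ Y => Y ∪ ⋃ a ∈ Y, (u a : Set ι)) n, rfl, fun _ => rfl⟩
  refine ⟨⋃ n, B n, hB₀ ▸ Set.subset_iUnion B 0, fun α hα β hβ => ?_, ?_⟩
  · obtain ⟨n, hn⟩ := Set.mem_iUnion.1 hα
    refine Set.mem_iUnion.2 ⟨n + 1, ?_⟩
    rw [hB]
    exact Or.inr (Set.mem_biUnion hn hβ)
  · have hc : ∀ n, #(B n) ≤ max #X ℵ₀ := by
      intro n
      induction n with
      | zero => rw [hB₀]; exact le_max_left _ _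
      | succ n ih =>
        rw [hB]
        refine (mk_union_le _ _).trans (add_le_of_le (le_max_right _ _) ih ?_)
        exact (mk_biUnion_finset_le _ _).trans (max_le ih (le_max_right _ _))
    refine (mk_iUnion_le _).trans ?_
    refine (mul_le_mul' mk_le_aleph0 (ciSup_le' hc)).trans ?_
    exact mul_le_of_le (le_max_right _ _) (le_max_right _ _) le_rfl

section Generic

variable {R ι : Type} [CommRing R] {e : ι → ι →₀ R}

theorem SuppClosed.exists_superset (e : ι → ι →₀ R) (X : Set ι) :
    ∃ B, X ⊆ B ∧ SuppClosed e B ∧ #B ≤ max #X ℵ₀ := by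
  obtain ⟨B, h1, h2, h3⟩ := exists_closure_finset (fun α => (e α).support) X
  exact ⟨B, h1, fun α hα β hβ => h2 α hα β (Finsupp.mem_support_iff.2 hβ), h3⟩

theorem GenericSystem.exists_index (G : GenericSystem e) (hι : ℵ₀ < #ι) {B : Set ι}
    (hB : #B < #ι) : ∃ i, ∀ α ∈ B, ∀ β γ, G.d (e α β) (γ, i) = 0 := by
  classical
  by_contra! h
  let u : ι → Finset ι := fun α =>
    (e α).support.biUnion fun β => (G.d (e α β)).support.image Prod.snd
  have hu : (⋃ a ∈ B, (u a : Set ι)) = Set.univ := by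
    refine Set.eq_univ_of_forall fun i => ?_
    obtain ⟨α, hα, β, γ, hne⟩ := h i
    refine Set.mem_biUnion hα ?_
    simp only [u, Finset.coe_biUnion, Set.mem_iUnion]
    refine ⟨β, Finsupp.mem_support_iff.2 fun h0 => hne (by simp [h0]), ?_⟩
    exact Finset.mem_coe.2 (Finset.mem_image.2 ⟨(γ, i), Finsupp.mem_support_iff.2 hne, rfl⟩)
  have := mk_biUnion_finset_le B u
  rw [hu, mk_univ] at this
  exact absurd this (not_le.2 (max_lt hB hι))

theorem GenericSystem.splitsOver_of_small (G : GenericSystem e) (hι : ℵ₀ < #ι) {B : Set ι}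
    (hB : #B < #ι) : SplitsOver e ∅ B := by
  obtain ⟨i, hi⟩ := G.exists_index hι hB
  obtain ⟨φ, hφ⟩ := G.exists_functional fun α => G.x (α, i)
  exact .of_generic G.d_mul G.d_x (fun _ => i) φ (fun α _ _ => hφ α)
    (fun α hα _ γ _ _ β => hi α hα β γ) (by simp)

/-- The club of good sets in a filtration of regular length. -/
theorem GenericSystem.exists_filtration (G : GenericSystem e) {c : Cardinal.{0}}
    (hc : c.IsRegular) (hc₀ : ℵ₀ < c) (hcι : c ≤ #ι) (y : c.ord.ToType → ι) {A₀ : Set ι}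
    (hA₀ : SuppClosed e A₀) (hA₀c : #A₀ < c) :
    ∃ (A : c.ord.ToType → Set ι) (T : Set c.ord.ToType),
      Monotone A ∧ (∀ τ, SuppClosed e (A τ)) ∧ (∀ τ, #(A τ) < c) ∧ (∀ τ, A₀ ⊆ A τ) ∧
      (∀ σ τ, σ < τ → y σ ∈ A τ) ∧
      (∀ S : Set c.ord.ToType, S.Nonempty → ∀ τ, IsLUB S τ → A τ ⊆ ⋃ s ∈ S, A s) ∧
      (∀ τ ∈ T, IsGood e c (A τ)) ∧ (∀ σ, ∃ τ ∈ T, σ < τ) ∧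
      (∀ S ⊆ T, S.Nonempty → ∀ τ, IsLUB S τ → τ ∈ T) ∧
      (∀ τ, IsMin τ → A τ = A₀) ∧ ∀ τ, A τ = ∅ → τ ∈ T := by
  classical
  let W := c.ord.ToType
  have hIio : ∀ τ : W, #(Set.Iio τ) < c := fun τ => by
    simpa [W] using mk_Iio_lt τ
  have hbdd : ∀ S : Set W, #S < c → ∃ τ, ∀ σ ∈ S, σ < τ := fun S hS => by
    refine not_isCofinal_iff.1 fun h => absurd (Order.cof_le h) (not_le.2 ?_)
    rwa [Ordinal.cof_toType, hc.cof_ord]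
  -- one step of the filtration
  have hstep : ∀ (τ : W) (X : Set ι), ∃ Y : Set ι, SuppClosed e X → #X < c →
      X ⊆ Y ∧ y τ ∈ Y ∧ SuppClosed e Y ∧ #Y < c ∧ (SplitsOver e X Y → IsGood e c X) := by
    intro τ X
    have hX : #X < c → ∃ B, X ⊆ B ∧ #B < c ∧ (SplitsOver e X B → IsGood e c X) := fun hXc => by
      by_cases hg : IsGood e c X
      · exact ⟨X, subset_rfl, hXc, fun _ => hg⟩
      · unfold IsGood at hg
        push Not at hg
        obtain ⟨B, -, h1, h2, h3⟩ := hg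
        exact ⟨B, h1, h2, fun h => (h3 h).elim⟩
    by_cases hXc : #X < c
    · obtain ⟨B, h1, h2, h3⟩ := hX hXc
      obtain ⟨Y, hY1, hY2, hY3⟩ := SuppClosed.exists_superset e (insert (y τ) B)
      refine ⟨Y, fun _ _ => ⟨h1.trans ((Set.subset_insert _ _).trans hY1),
        hY1 (Set.mem_insert _ _), hY2, hY3.trans_lt (max_lt ?_ hc₀), fun h => h3 (h.mono ?_)⟩⟩
      · exact mk_insert_le.trans_lt (add_lt_of_lt hc₀.le h2 (one_lt_aleph0.trans hc₀))
      · exact fun β hβ _ => hY1 (Set.mem_insert_of_mem _ hβ)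
    · exact ⟨X, fun _ h => (hXc h).elim⟩
  choose next hnext using hstep
  obtain ⟨N, hN⟩ : ∃ N : W → Set ι, ∀ τ, N τ = next τ (A₀ ∪ ⋃ σ ∈ Set.Iio τ, N σ) := by
    have hwf : WellFounded (fun a b : W => a < b) := wellFounded_lt
    refine ⟨hwf.fix fun τ F => next τ (A₀ ∪ ⋃ σ, ⋃ h : σ < τ, F σ h), fun τ => ?_⟩
    rw [hwf.fix_eq]
    rfl
  let A : W → Set ι := fun τ => A₀ ∪ ⋃ σ ∈ Set.Iio τ, N σ
  have hNA : ∀ τ, N τ = next τ (A τ) := hN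
  have hNsub : ∀ {σ τ}, σ < τ → N σ ⊆ A τ := fun {σ τ} h γ hγ =>
    Or.inr (Set.mem_biUnion (show σ ∈ Set.Iio τ from h) hγ)
  have hmem : ∀ {τ γ}, γ ∈ A τ → γ ∈ A₀ ∨ ∃ σ < τ, γ ∈ N σ := fun {τ γ} h => by
    simpa [A] using h
  have hA : ∀ τ, SuppClosed e (A τ) ∧ #(A τ) < c := by
    intro τ
    induction τ using WellFoundedLT.induction with
    | ind τ ih =>
    have hNσ : ∀ σ < τ, SuppClosed e (N σ) ∧ #(N σ) < c := fun σ hσ => by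
      have := hnext σ (A σ) (ih σ hσ).1 (ih σ hσ).2
      rw [hNA]
      exact ⟨this.2.2.1, this.2.2.2.1⟩
    constructor
    · intro α hα β hβ
      rcases hmem hα with h | ⟨σ, hσ, h⟩
      · exact Or.inl (hA₀ α h β hβ)
      · exact hNsub hσ ((hNσ σ hσ).1 α h β hβ)
    · refine (mk_union_le _ _).trans_lt (add_lt_of_lt hc₀.le hA₀c ?_)
      exact (card_biUnion_lt_iff_forall_of_isRegular hc (hIio τ)).2 fun σ hσ => (hNσ σ hσ).2
  have hstepA : ∀ τ, A τ ⊆ N τ ∧ y τ ∈ N τ ∧ SuppClosed e (N τ) ∧ #(N τ) < c ∧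
      (SplitsOver e (A τ) (N τ) → IsGood e c (A τ)) := fun τ => by
    rw [hNA]
    exact hnext τ (A τ) (hA τ).1 (hA τ).2
  have hmono : Monotone A := fun σ τ h γ hγ => by
    rcases hmem hγ with h' | ⟨σ', hσ', h'⟩
    · exact Or.inl h'
    · exact hNsub (hσ'.trans_le h) h'
  have hcont : ∀ S : Set W, S.Nonempty → ∀ τ, IsLUB S τ → A τ ⊆ ⋃ s ∈ S, A s := by
    rintro S ⟨s₀, hs₀⟩ τ hτ γ hγ
    rcases hmem hγ with h | ⟨σ, hσ, h⟩
    · exact Set.mem_biUnion hs₀ (Or.inl h)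
    · obtain ⟨s, hs, hσs⟩ := (lt_isLUB_iff hτ).1 hσ
      exact Set.mem_biUnion hs (hNsub hσs h)
  -- the generic functional
  choose i hi using fun τ => G.exists_index (hc₀.trans_le hcι) ((hstepA τ).2.2.2.1.trans_le hcι)
  obtain ⟨ρ, hρ⟩ : ∃ ρ : ι → W, ∀ τ, ∀ α ∈ N τ, α ∉ A τ → ρ α = τ := by
    have hne : Nonempty W := by
      obtain ⟨τ, -⟩ := hbdd ∅ (by simpa using hc.pos)
      exact ⟨τ⟩
    have : ∀ α, ∃ σ, ∀ τ, α ∈ N τ → α ∉ A τ → σ = τ := fun α => by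
      by_cases h : ∃ σ, α ∈ N σ ∧ α ∉ A σ
      · obtain ⟨σ, h1, h2⟩ := h
        refine ⟨σ, fun τ h3 h4 => ?_⟩
        rcases lt_trichotomy σ τ with hlt | heq | hlt
        · exact (h4 (hNsub hlt h1)).elim
        · exact heq
        · exact (h2 (hNsub hlt h3)).elim
      · exact ⟨Classical.arbitrary W, fun τ h1 h2 => (h ⟨τ, h1, h2⟩).elim⟩
    choose ρ hρ using this
    exact ⟨ρ, fun τ α => hρ α τ⟩
  obtain ⟨φ, hφ⟩ := G.exists_functional fun α => G.x (α, i (ρ α))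
  let u : ι → Finset ι := fun β => (G.d (φ (Finsupp.single β 1))).support.image Prod.fst
  let T : Set W := {τ | ∀ β ∈ A τ, ∀ γ ∈ u β, ∀ σ, γ ∈ A σ → γ ∈ A τ}
  have hsucc : ∀ σ : W, ∃ τ, σ < τ := fun σ => by
    obtain ⟨τ, h⟩ := hbdd {σ} (by simpa using one_lt_aleph0.trans hc₀)
    exact ⟨τ, h σ rfl⟩
  have hTgood : ∀ τ ∈ T, IsGood e c (A τ) := fun τ hτ => by
    refine (hstepA τ).2.2.2.2 (.of_generic G.d_mul G.d_x (fun γ => i (ρ γ)) φ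
      (fun α _ _ => hφ α) ?_ ?_)
    · intro α hα _ γ hγ hγ' β
      rw [hρ τ γ hγ hγ']
      exact hi τ α hα β γ
    · intro β hβ γ hγ hγ'
      by_contra hne
      obtain ⟨τ', hτ'⟩ := hsucc τ
      exact hγ' (hτ β hβ γ (Finset.mem_image.2 ⟨_, Finsupp.mem_support_iff.2 hne, rfl⟩) τ'
        (hNsub hτ' hγ))
  have hTunbdd : ∀ σ, ∃ τ ∈ T, σ < τ := by
    have hbound : ∀ σ : W, ∃ τ, σ < τ ∧ ∀ β ∈ A σ, ∀ γ ∈ u β, ∀ σ', γ ∈ A σ' → γ ∈ A τ := by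
      intro σ
      have : ∀ γ, ∃ τ, ∀ σ', γ ∈ A σ' → γ ∈ A τ := fun γ => by
        by_cases h : ∃ τ, γ ∈ A τ
        · obtain ⟨τ, h⟩ := h
          exact ⟨τ, fun _ _ => h⟩
        · exact ⟨σ, fun σ' h' => (h ⟨σ', h'⟩).elim⟩
      choose t ht using this
      obtain ⟨τ, hτ⟩ := hbdd (insert σ (t '' ⋃ β ∈ A σ, (u β : Set ι))) (by
        refine mk_insert_le.trans_lt (add_lt_of_lt hc₀.le ?_ (one_lt_aleph0.trans hc₀))
        exact (mk_image_le.trans (mk_biUnion_finset_le _ _)).trans_lt (max_lt (hA σ).2 hc₀))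
      refine ⟨τ, hτ σ (Set.mem_insert _ _), fun β hβ γ hγ σ' hσ' => ?_⟩
      refine hmono (hτ (t γ) ?_).le (ht γ σ' hσ')
      exact Set.mem_insert_of_mem _ ⟨γ, Set.mem_biUnion hβ hγ, rfl⟩
    choose s hs₁ hs₂ using hbound
    intro σ
    let S : Set W := Set.range fun n => s^[n] σ
    obtain ⟨b, hb⟩ := hbdd S (mk_range_le.trans_lt (by simpa using hc₀))
    have hne : (upperBounds S).Nonempty := ⟨b, fun x hx => (hb x hx).le⟩
    have hlub : IsLUB S (wellFounded_lt.min (upperBounds S) hne) :=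
      ⟨wellFounded_lt.min_mem _ hne, fun x hx => not_lt.1 (wellFounded_lt.not_lt_min _ hx)⟩
    refine ⟨_, fun β hβ γ hγ σ' hσ' => ?_, (hs₁ σ).trans_le (hlub.1 ⟨1, rfl⟩)⟩
    obtain ⟨_, ⟨n, rfl⟩, hn⟩ := Set.mem_iUnion₂.1 (hcont S ⟨σ, 0, rfl⟩ _ hlub hβ)
    refine hmono (hlub.1 ⟨n + 1, rfl⟩) ?_
    simp only [Function.iterate_succ_apply']
    exact hs₂ _ β hn γ hγ σ' hσ'
  refine ⟨A, T, hmono, fun τ => (hA τ).1, fun τ => (hA τ).2, fun τ => Set.subset_union_left,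
    fun σ τ h => hNsub h (hstepA σ).2.1, hcont, hTgood, hTunbdd, ?_, ?_, ?_⟩
  · intro S hS hne τ hτ β hβ γ hγ σ hσ
    obtain ⟨s, hs, h⟩ := Set.mem_iUnion₂.1 (hcont S hne τ hτ hβ)
    exact hmono (hτ.1 hs) (hS hs β h γ hγ σ hσ)
  · intro τ hτ
    refine Set.Subset.antisymm (fun γ hγ => ?_) Set.subset_union_left
    rcases hmem hγ with h | ⟨σ, hσ, -⟩
    · exact h
    · exact (hτ.not_lt hσ).elim
  · intro τ hτ β hβ
    rw [hτ] at hβ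
    exact hβ.elim

end Generic

section SplitsAll

variable {R ι : Type} [CommRing R] {e : ι → ι →₀ R}

theorem GenericSystem.splitsOver_of_isRegular (G : GenericSystem e) (hι : ℵ₀ < #ι)
    (hreg : (#ι).IsRegular) : SplitsOver e ∅ Set.univ := by
  obtain ⟨y⟩ : Nonempty ((#ι).ord.ToType ≃ ι) := Cardinal.eq.1 (mk_ord_toType _)
  obtain ⟨A, T, hmono, hcl, hcard, -, hy, hcont, hgood, hunbdd, hclub, hmin, hempty⟩ :=
    G.exists_filtration hreg hι le_rfl y (A₀ := ∅) (fun _ h => h.elim)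
      (by simpa using hreg.pos)
  have hgreatest : ∀ β, ∃ τ, IsGreatest {τ | τ ∈ T ∧ β ∉ A τ} τ := by
    intro β
    let S := {τ | τ ∈ T ∧ β ∉ A τ}
    obtain ⟨τ₁, -, hτ₁⟩ := hunbdd (y.symm β)
    have hβ : β ∈ A τ₁ := by simpa using hy _ _ hτ₁
    have hne : S.Nonempty := by
      let m := wellFounded_lt.min Set.univ ⟨τ₁, Set.mem_univ _⟩
      have hm : A m = ∅ := hmin m fun x _ =>
        not_lt.1 (wellFounded_lt.not_lt_min Set.univ (Set.mem_univ x))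
      exact ⟨m, hempty m hm, by simp [hm]⟩
    have hub : (upperBounds S).Nonempty :=
      ⟨τ₁, fun τ hτ => le_of_not_ge fun h => hτ.2 (hmono h hβ)⟩
    have hlub : IsLUB S (wellFounded_lt.min (upperBounds S) hub) :=
      ⟨wellFounded_lt.min_mem _ hub, fun x hx => not_lt.1 (wellFounded_lt.not_lt_min _ hx)⟩
    refine ⟨_, ⟨hclub S (fun τ hτ => hτ.1) hne _ hlub, fun h => ?_⟩, hlub.1⟩
    obtain ⟨s, hs, h'⟩ := Set.mem_iUnion₂.1 (hcont S hne _ hlub h)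
    exact hs.2 h'
  choose r hr using hgreatest
  have hlt : ∀ w ∈ T, ∀ β, r β < w ↔ β ∈ A w := fun w hw β =>
    ⟨fun h => by_contra fun h' => absurd ((hr β).2 ⟨hw, h'⟩) (not_le.2 h),
      fun h => lt_of_not_ge fun h' => (hr β).1.2 (hmono h' h)⟩
  refine .of_filtration r (fun α β hβ => ?_) fun α => ?_
  · refine le_of_not_gt fun h => (hr β).1.2 ?_
    exact hcl _ α ((hlt _ (hr β).1.1 α).1 h) β hβ
  · obtain ⟨w, hw, hrw⟩ := hunbdd (r α)
    have hset : {β | r β < r α} = A (r α) := Set.ext fun β => hlt _ (hr α).1.1 β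
    rw [hset]
    exact (hgood _ (hr α).1.1 (A w) (hcl w) (hmono hrw.le) (hcard w)).mono
      fun β hβ _ => (hlt w hw β).1 (lt_of_le_of_lt hβ hrw)

theorem GenericSystem.exists_isGood (G : GenericSystem e) {μ : Cardinal.{0}} (hμ : ℵ₀ ≤ μ)
    (hμι : μ < #ι) {X : Set ι} (hX : #X ≤ μ) :
    ∃ A, X ⊆ A ∧ SuppClosed e A ∧ #A ≤ μ ∧ IsGood e (Order.succ μ) A := by
  obtain ⟨B, hXB, hB, hBμ⟩ := SuppClosed.exists_superset e X
  have hlt : ℵ₀ < Order.succ μ := Order.lt_succ_of_le hμ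
  have hne : Nonempty ι := mk_ne_zero_iff.1 (ne_bot_of_gt hμι)
  obtain ⟨A, T, -, hcl, hcard, hsub, -, -, hgood, hunbdd, -⟩ :=
    G.exists_filtration (isRegular_succ hμ) hlt (Order.succ_le_of_lt hμι)
      (fun _ => Classical.arbitrary ι) hB (Order.lt_succ_of_le (hBμ.trans (max_le hX hμ)))
  have hW : Nonempty (Order.succ μ).ord.ToType := by
    rw [← mk_ne_zero_iff, mk_ord_toType]
    exact (zero_lt_one.trans (one_lt_aleph0.trans hlt)).ne'
  obtain ⟨τ, hτ, -⟩ := hunbdd hW.some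
  exact ⟨A τ, hXB.trans (hsub τ), hcl τ, Order.le_of_lt_succ (hcard τ), hgood τ hτ⟩

/-- A coherent system of support-closed good sets with splittings, indexed by `S`. -/
structure GoodState {S : Type} (e : ι → ι →₀ R) (μ : S → Cardinal.{0}) where
  B : S → Set ι
  Φ : S → (ι →₀ R) →ₗ[R] (ι →₀ R)
  suppClosed : ∀ ξ, SuppClosed e (B ξ)
  card_le : ∀ ξ, #(B ξ) ≤ μ ξ
  isGood : ∀ ξ, IsGood e (Order.succ (μ ξ)) (B ξ)
  apply_e : ∀ ξ, ∀ α ∈ B ξ, Φ ξ (e α) = Finsupp.single α 1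

theorem GoodState.exists_next {S : Type} {μ : S → Cardinal.{0}} (G : GenericSystem e)
    (hμ : ∀ ξ, ℵ₀ ≤ μ ξ) (hμι : ∀ ξ, μ ξ < #ι) (hS : ∀ ξ, #S ≤ μ ξ) (s : GoodState e μ) :
    ∃ t : GoodState e μ, ∀ ξ, s.B ξ ⊆ t.B ξ ∧
      (∀ β ∈ s.B ξ, ∀ ζ γ, s.Φ ζ (Finsupp.single β 1) γ ≠ 0 → γ ∈ t.B ξ) ∧
      ∀ β ∈ s.B ξ, t.Φ ξ (Finsupp.single β 1) = s.Φ ξ (Finsupp.single β 1) := by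
  have h : ∀ ξ, ∃ B, s.B ξ ⊆ B ∧
      (∀ β ∈ s.B ξ, ∀ ζ γ, s.Φ ζ (Finsupp.single β 1) γ ≠ 0 → γ ∈ B) ∧
      SuppClosed e B ∧ #B ≤ μ ξ ∧ IsGood e (Order.succ (μ ξ)) B := by
    intro ξ
    let Y : Set ι := ⋃ p ∈ s.B ξ ×ˢ (Set.univ : Set S),
      ((s.Φ p.2 (Finsupp.single p.1 1)).support : Set ι)
    have hY : #Y ≤ μ ξ := by
      refine (mk_biUnion_finset_le _ _).trans (max_le ?_ (hμ ξ))
      rw [mk_setProd, mk_univ]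
      simpa using mul_le_of_le (hμ ξ) (s.card_le ξ) (hS ξ)
    obtain ⟨B, h1, h2, h3, h4⟩ := G.exists_isGood (hμ ξ) (hμι ξ) (X := s.B ξ ∪ Y)
      ((mk_union_le _ _).trans (add_le_of_le (hμ ξ) (s.card_le ξ) hY))
    refine ⟨B, Set.subset_union_left.trans h1, fun β hβ ζ γ hγ => h1 (Or.inr ?_), h2, h3, h4⟩
    exact Set.mem_biUnion (x := (β, ζ)) ⟨hβ, Set.mem_univ _⟩ (Finsupp.mem_support_iff.2 hγ)
  choose B hsub hΦ hcl hcard hgood using h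
  choose Ψ hΨ₁ hΨ₂ using fun ξ => (s.isGood ξ (B ξ) (hcl ξ) (hsub ξ)
    (Order.lt_succ_of_le (hcard ξ))).concat (s.suppClosed ξ) (s.apply_e ξ)
  exact ⟨⟨B, Ψ, hcl, hcard, hgood, hΨ₂⟩, fun ξ => ⟨hsub ξ, hΦ ξ, hΨ₁ ξ⟩⟩

theorem GenericSystem.splitsOver_of_cover (G : GenericSystem e) {S : Type}
    {μ : S → Cardinal.{0}} (hμ : ∀ ξ, ℵ₀ ≤ μ ξ) (hμι : ∀ ξ, μ ξ < #ι) (hS : ∀ ξ, #S ≤ μ ξ)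
    (X : S → Set ι) (hX : ∀ ξ, #(X ξ) ≤ μ ξ) (hcover : ∀ β, ∃ ξ, β ∈ X ξ) :
    SplitsOver e ∅ Set.univ := by
  classical
  obtain ⟨_, _⟩ := exists_wellFoundedLT S
  obtain ⟨s₀, hs₀⟩ : ∃ s : GoodState e μ, ∀ ξ, X ξ ⊆ s.B ξ := by
    choose B h1 h2 h3 h4 using fun ξ => G.exists_isGood (hμ ξ) (hμι ξ) (hX ξ)
    choose Φ _ hΦ using fun ξ => G.splitsOver_of_small ((hμ ξ).trans_lt (hμι ξ))
      ((h3 ξ).trans_lt (hμι ξ))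
    exact ⟨⟨B, Φ, h2, h3, h4, fun ξ α hα => hΦ ξ α hα (Set.notMem_empty α)⟩, h1⟩
  choose next hnext using GoodState.exists_next G hμ hμι hS
  let s : ℕ → GoodState e μ := fun n => next^[n] s₀
  have hs : ∀ n, s (n + 1) = next (s n) := fun n => Function.iterate_succ_apply' _ _ _
  have hmono : ∀ ξ, Monotone fun n => (s n).B ξ := fun ξ =>
    monotone_nat_of_le_succ fun n => by
      rw [hs]
      exact (hnext (s n) ξ).1
  have hstable : ∀ ξ n m, n ≤ m → ∀ β ∈ (s n).B ξ,
      (s m).Φ ξ (Finsupp.single β 1) = (s n).Φ ξ (Finsupp.single β 1) := by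
    intro ξ n m hnm β hβ
    induction m, hnm using Nat.le_induction with
    | base => rfl
    | succ m hm ih => rw [hs, (hnext (s m) ξ).2.2 β (hmono ξ hm hβ), ih]
  let B : S → Set ι := fun ξ => ⋃ n, (s n).B ξ
  let Φ : S → (ι →₀ R) →ₗ[R] (ι →₀ R) := fun ξ => Finsupp.linearCombination R fun β =>
    if h : ∃ n, β ∈ (s n).B ξ then (s h.choose).Φ ξ (Finsupp.single β 1) else 0
  have hΦ : ∀ ξ n, ∀ β ∈ (s n).B ξ,
      Φ ξ (Finsupp.single β 1) = (s n).Φ ξ (Finsupp.single β 1) := by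
    intro ξ n β hβ
    have h : ∃ n, β ∈ (s n).B ξ := ⟨n, hβ⟩
    simp only [Φ, Finsupp.linearCombination_single, one_smul, dif_pos h]
    rw [← hstable ξ _ _ (le_max_left _ n) β h.choose_spec,
      hstable ξ _ _ (le_max_right _ _) β hβ]
  have hcl : ∀ ξ, SuppClosed e (B ξ) := by
    intro ξ α hα β hβ
    obtain ⟨n, hn⟩ := Set.mem_iUnion.1 hα
    exact Set.mem_iUnion.2 ⟨n, (s n).suppClosed ξ α hn β hβ⟩
  have hΦe : ∀ ξ, ∀ α ∈ B ξ, Φ ξ (e α) = Finsupp.single α 1 := by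
    intro ξ α hα
    obtain ⟨n, hn⟩ := Set.mem_iUnion.1 hα
    rw [← (s n).apply_e ξ α hn, Finsupp.linearMap_apply_eq_sum,
      Finsupp.linearMap_apply_eq_sum ((s n).Φ ξ)]
    refine Finset.sum_congr rfl fun β hβ => ?_
    rw [hΦ ξ n β ((s n).suppClosed ξ α hn β (Finsupp.mem_support_iff.1 hβ))]
  have hΦB : ∀ ξ ζ, ∀ β ∈ B ξ, β ∈ B ζ → ∀ γ, Φ ζ (Finsupp.single β 1) γ ≠ 0 → γ ∈ B ξ := by
    intro ξ ζ β hβξ hβζ γ hγ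
    obtain ⟨n, hn⟩ := Set.mem_iUnion.1 hβξ
    obtain ⟨m, hm⟩ := Set.mem_iUnion.1 hβζ
    rw [hΦ ζ (max n m) β (hmono ζ (le_max_right _ _) hm)] at hγ
    refine Set.mem_iUnion.2 ⟨max n m + 1, ?_⟩
    rw [hs]
    exact (hnext (s (max n m)) ξ).2.1 β (hmono ξ (le_max_left _ _) hn) ζ γ hγ
  have hne : ∀ β, {ξ | β ∈ B ξ}.Nonempty := fun β => by
    obtain ⟨ξ, hξ⟩ := hcover β
    exact ⟨ξ, Set.mem_iUnion.2 ⟨0, hs₀ ξ hξ⟩⟩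
  let ρ : ι → S := fun β => wellFounded_lt.min {ξ | β ∈ B ξ} (hne β)
  have hρ : ∀ β, β ∈ B (ρ β) := fun β => wellFounded_lt.min_mem _ (hne β)
  have hρle : ∀ β ξ, β ∈ B ξ → ρ β ≤ ξ := fun β ξ h =>
    not_lt.1 (wellFounded_lt.not_lt_min {ξ | β ∈ B ξ} h)
  refine .of_filtration ρ (fun α β hβ => hρle β _ (hcl _ α (hρ α) β hβ)) fun α => ?_
  refine (SplitsOver.of_restrict (hcl (ρ α)) (hΦe (ρ α)) (A := {β | ρ β < ρ α})
    fun β hβ hβ' γ hγ => ?_).mono fun β hβ hβ' => ?_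
  · exact lt_of_le_of_lt (hρle γ _ (hΦB (ρ β) (ρ α) β (hρ β) hβ' γ hγ)) hβ
  · have h : ρ β = ρ α := le_antisymm hβ (not_lt.1 hβ')
    exact h ▸ hρ β

theorem GenericSystem.splitsOver (G : GenericSystem e) (hι : ℵ₀ < #ι) :
    SplitsOver e ∅ Set.univ := by
  rcases isRegular_or_isSingular hι.le with hreg | hsing
  · exact G.splitsOver_of_isRegular hι hreg
  obtain ⟨y⟩ : Nonempty ((#ι).ord.ToType ≃ ι) := Cardinal.eq.1 (mk_ord_toType _)
  obtain ⟨S, hS, hScard⟩ := Order.exists_cof_eq (α := (#ι).ord.ToType)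
  rw [Ordinal.cof_toType] at hScard
  have hSlt : #S < #ι := hScard ▸ hsing.cof_ord_lt
  let X : S → Set ι := fun ξ => y '' Set.Iic ξ.1
  have hX : ∀ ξ, #(X ξ) < #ι := fun ξ => by
    refine mk_image_le.trans_lt ?_
    rw [← Set.Iio_insert]
    refine mk_insert_le.trans_lt (add_lt_of_lt hι.le ?_ (one_lt_aleph0.trans hι))
    simpa using mk_Iio_lt ξ.1
  refine G.splitsOver_of_cover (μ := fun ξ => max (max #(X ξ) #S) ℵ₀)
    (fun ξ => le_max_right _ _) (fun ξ => max_lt (max_lt (hX ξ) hSlt) hι)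
    (fun ξ => (le_max_right _ _).trans (le_max_left _ _)) X
    (fun ξ => (le_max_left _ _).trans (le_max_left _ _)) fun β => ?_
  obtain ⟨ξ, hξ, hle⟩ := hS (y.symm β)
  exact ⟨⟨ξ, hξ⟩, y.symm β, hle, by simp⟩

end SplitsAll

/-- A module of cardinality at most `#ι` has a presentation `ι →₀ R → M` whose kernel has a basis
indexed by `ι`. -/
theorem exists_presentation {R ι M : Type} [CommRing R] [IsDomain R] [IsPrincipalIdealRing R]
    [AddCommGroup M] [Module R M] [Infinite ι] (hR : #R = #ι) (hM : #M ≤ #ι) :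
    ∃ π : (ι →₀ R) →ₗ[R] M, Function.Surjective π ∧
      Nonempty (Module.Basis ι R (LinearMap.ker π)) := by
  obtain ⟨σ⟩ : Nonempty (ι ≃ ι ⊕ ι) := Cardinal.eq.1 (by simp)
  obtain ⟨f⟩ := hM
  let s : ι → M := Function.invFun f
  have hs : Function.Surjective s := Function.invFun_surjective f.injective
  let π : (ι →₀ R) →ₗ[R] M := Finsupp.linearCombination R fun a => (σ a).elim s 0
  have hπ : ∀ a, π (Finsupp.single a 1) = (σ a).elim s 0 := fun a => by simp [π]
  refine ⟨π, fun m => ?_, ?_⟩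
  · obtain ⟨a, rfl⟩ := hs m
    exact ⟨Finsupp.single (σ.symm (Sum.inl a)) 1, by simp [hπ]⟩
  have := Submodule.free_of_le_finsupp (LinearMap.ker π)
  let b := Module.Free.chooseBasis R (LinearMap.ker π)
  have hle : #(Module.Free.ChooseBasisIndex R (LinearMap.ker π)) ≤ #ι := by
    refine (mk_le_of_injective b.injective).trans ((mk_le_of_injective
      (LinearMap.ker π).injective_subtype).trans ?_)
    have : Infinite R := infinite_iff.2 (hR ▸ aleph0_le_mk ι)
    simp [hR]
  have hge : #ι ≤ #(Module.Free.ChooseBasisIndex R (LinearMap.ker π)) := by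
    let v : ι → LinearMap.ker π := fun a =>
      ⟨Finsupp.single (σ.symm (Sum.inr a)) 1, by simp [hπ]⟩
    have hv : LinearIndependent R v := by
      refine LinearIndependent.of_comp (LinearMap.ker π).subtype ?_
      exact (Finsupp.linearIndependent_single_one R ι).comp (fun a => σ.symm (Sum.inr a))
        (σ.symm.injective.comp Sum.inr_injective)
    rw [b.mk_eq_rank'']
    exact hv.cardinal_le_rank
  obtain ⟨τ⟩ := Cardinal.eq.1 (le_antisymm hle hge)
  exact ⟨b.reindex τ⟩

/-- Eklof–Shelah, Theorem 5: for every cardinal `κ ≥ ℵ₁` there is a local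
p.i.d. `R` of cardinality `κ` such that an `R`-module of cardinality `≤ κ` is Whitehead
only if it is free. -/
theorem exists_local_pid_whitehead_implies_free :
    ∀ κ : Cardinal.{0}, aleph 1 ≤ κ →
    ∃ (R : Type) (_ : CommRing R),
      IsDomain R ∧ IsPrincipalIdealRing R ∧ ¬ IsField R ∧ IsLocalRing R ∧
      #R = κ ∧
      ∀ (M : Type) (_ : AddCommGroup M) (_ : Module R M),
        #M ≤ κ → IsWhitehead R M → Module.Free R M := by
  intro κ hκ
  have hκ₀ : ℵ₀ < κ := by simpa using hκ
  obtain ⟨ι, rfl⟩ : ∃ ι : Type, #ι = κ := ⟨κ.out, mk_out κ⟩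
  have : Infinite ι := infinite_iff.2 hκ₀.le
  obtain ⟨R, _, _, _, x, d, hR, hd, hx⟩ := exists_dvr_derivation (ι × ι)
  have hRι : #R = #ι := by rw [hR]; simp
  refine ⟨R, inferInstance, inferInstance, inferInstance, IsDiscreteValuationRing.not_isField R,
    inferInstance, hRι, fun M _ _ hM hW => ?_⟩
  obtain ⟨π, hπ, ⟨b⟩⟩ := exists_presentation (ι := ι) (M := M) hRι hM
  let G : GenericSystem fun α => (b α : ι →₀ R) :=
    { x := x
      d := d
      d_mul := hd
      d_x := hx
      exists_functional := fun ψ => by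
        obtain ⟨φ, hφ⟩ := hW.exists_extension π hπ (b.constr R ψ)
        exact ⟨φ, fun α => by rw [hφ, b.constr_basis]⟩ }
  refine (G.splitsOver hκ₀).free Submodule.free_of_le_finsupp hπ ?_
  have := congrArg (Submodule.map (LinearMap.ker π).subtype) b.span_eq
  rwa [Submodule.map_span, ← Set.range_comp, Submodule.map_subtype_top] at this
end
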